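/- arXiv:2110.10740 — 2 statements merged into one kernel-verified Lean document; each statement's English description precedes it below -/
import Mathlib

section
/- Let M = (X, I) be a matroid on |X| = n elements, let k be an integer with 1 ≤ k < rk(M), and let ω : X → ℝ_{>0} be a weight function. Then I_ω(k)² = (1 + 1/k)·(1 + 1/(n − k))·I_ω(k−1)·I_ω(k+1) if and only if every subset of X of size k+1 is independent (equivalently, girth(M) > k+1) and the weight function ω is uniform. -/
open scoped Classical BigOperators

noncomputable section

variable {X : Type*} [Fintype X] [DecidableEq X]

/-- The number of independent sets of size `k` of the set system `Indep`. -/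
def numIndep (Indep : Finset X → Prop) (k : ℕ) : ℕ :=
  (Finset.univ.filter (fun S : Finset X => Indep S ∧ S.card = k)).card

/-- The weighted count of independent sets of size `k`:
`I_ω(k) = Σ_{S ∈ I, |S| = k} Π_{x ∈ S} ω(x)`. -/
def wNumIndep (Indep : Finset X → Prop) (ω : X → ℝ) (k : ℕ) : ℝ :=
  ∑ S ∈ Finset.univ.filter (fun S : Finset X => Indep S ∧ S.card = k), ∏ x ∈ S, ω x

/-- The rank of a matroid: the maximal size of an independent set. -/
def matroidRk (Indep : Finset X → Prop) : ℕ :=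
  Finset.univ.sup (fun S : Finset X => if Indep S then S.card else 0)

/-- The set of continuations of an independent set `S`. -/
def mCont (Indep : Finset X → Prop) (S : Finset X) : Finset X :=
  Finset.univ.filter (fun x => x ∉ S ∧ Indep (insert x S))

/-- The parallel class of `x ∈ Cnt(S)`:  the set of continuations `y` with `y ∼_S x`,
i.e. `y = x` or `S ∪ {x,y}` is not independent. -/
def mParClass (Indep : Finset X → Prop) (S : Finset X) (x : X) : Finset X :=
  (mCont Indep S).filter (fun y => y = x ∨ ¬ Indep (insert y (insert x S)))

/-- The set `Par(S)` of parallel classes of `S`. -/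
def mParClasses (Indep : Finset X → Prop) (S : Finset X) : Finset (Finset X) :=
  (mCont Indep S).image (mParClass Indep S)

/-- The `k`-continuation number `p(k)`: the maximal number of parallel classes of an
independent set of size `k`. -/
def contNum (Indep : Finset X → Prop) (k : ℕ) : ℕ :=
  (Finset.univ.filter (fun S : Finset X => Indep S ∧ S.card = k)).sup
    (fun S => (mParClasses Indep S).card)

open Matrix

lemma aux_range {ι : Type*} [Fintype ι] [DecidableEq ι] (K : Matrix ι ι ℝ) (hK : K.IsSymm)
    (b : ι → ℝ) (h : ∀ q, K *ᵥ q = 0 → b ⬝ᵥ q = 0) : ∃ y, K *ᵥ y = b := by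
  have hs : (Matrix.toEuclideanLin K).IsSymmetric := by
    rw [Matrix.isSymmetric_toEuclideanLin_iff]
    rw [Matrix.IsHermitian, Matrix.conjTranspose_eq_transpose_of_trivial]
    exact hK
  have h1 := hs.orthogonal_range
  have h2 : (WithLp.toLp 2 b : EuclideanSpace ℝ ι) ∈ (LinearMap.range (Matrix.toEuclideanLin K)) := by
    rw [← Submodule.orthogonal_orthogonal (LinearMap.range (Matrix.toEuclideanLin K)), h1]
    rw [Submodule.mem_orthogonal]
    intro q hq
    have h3 : K *ᵥ (WithLp.ofLp q) = 0 := by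
      have := LinearMap.mem_ker.1 hq
      have := congrArg WithLp.ofLp this
      simpa using this
    have := h _ h3
    simpa [EuclideanSpace.inner_eq_star_dotProduct] using this
  obtain ⟨y, hy⟩ := h2
  refine ⟨WithLp.ofLp y, ?_⟩
  have := congrArg WithLp.ofLp hy
  simpa using this

lemma aux_symm_dot {ι : Type*} [Fintype ι] (K : Matrix ι ι ℝ) (hK : K.IsSymm)
    (x y : ι → ℝ) : x ⬝ᵥ K *ᵥ y = y ⬝ᵥ K *ᵥ x := by
  rw [dotProduct_mulVec, ← mulVec_transpose, hK.eq, dotProduct_comm]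

/-- Laplacian identity -/
lemma aux_lap {ι : Type*} [Fintype ι] (N : Matrix ι ι ℝ) (hN : N.IsSymm)
    (w : ι → ℝ) (hw : ∀ i, 0 < w i) (x : ι → ℝ) :
    (∑ i, (N *ᵥ w) i / w i * x i ^ 2) - x ⬝ᵥ N *ᵥ x =
      (1/2) * ∑ i, ∑ j, N i j * w i * w j * (x i / w i - x j / w j) ^ 2 := by
  have e1 : ∀ i j, N i j * w i * w j * (x i / w i - x j / w j) ^ 2 =
      N i j * w j / w i * x i ^ 2 + N i j * w i / w j * x j ^ 2 - 2 * (x i * (N i j * x j)) := by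
    intro i j
    have := (hw i).ne'
    have := (hw j).ne'
    field_simp
    ring
  simp only [e1, Finset.sum_sub_distrib, Finset.sum_add_distrib]
  rw [Finset.sum_comm (f := fun i j => N i j * w i / w j * x j ^ 2)]
  have e2 : ∀ i j, N j i = N i j := fun i j => hN.apply i j
  simp only [e2, dotProduct, mulVec, Finset.sum_div, Finset.sum_mul, Finset.mul_sum]
  simp only [← Finset.mul_sum]
  ring

lemma aux_step1 {ι : Type*} [Fintype ι] [DecidableEq ι] (N : Matrix ι ι ℝ) (hN : N.IsSymm)
    (hnn : ∀ i j, 0 ≤ N i j) (w : ι → ℝ) (hw : ∀ i, 0 < w i)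
    (hz : ∀ i, (N *ᵥ w) i = 0 → ∀ j, N i j = 0)
    (hconn : ∀ q : ι → ℝ, (∀ i j, N i j ≠ 0 → q i = q j) →
      ∃ c, ∀ i, (N *ᵥ w) i ≠ 0 → q i = c)
    (hineq : ∀ x : ι → ℝ, x ⬝ᵥ N *ᵥ x ≤ ∑ i, w i * ((N *ᵥ x) i) ^ 2 / (N *ᵥ w) i)
    (x : ι → ℝ) (hx : x ⬝ᵥ N *ᵥ w = 0) : x ⬝ᵥ N *ᵥ x ≤ 0 := by
  set D : ι → ℝ := fun i => (N *ᵥ w) i / w i with hD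
  set K : Matrix ι ι ℝ := Matrix.diagonal D - N with hKdef
  have hK : K.IsSymm := (Matrix.isSymm_diagonal D).sub hN
  have hKq : ∀ q : ι → ℝ, K *ᵥ q = fun i => D i * q i - (N *ᵥ q) i := by
    intro q; ext i
    simp [hKdef, Matrix.sub_mulVec, Matrix.mulVec_diagonal]
  have hKK : ∀ q : ι → ℝ, q ⬝ᵥ K *ᵥ q = (∑ i, D i * q i ^ 2) - q ⬝ᵥ N *ᵥ q := by
    intro q
    rw [hKq]
    simp only [dotProduct, mul_sub, Finset.sum_sub_distrib]
    congr 1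
    exact Finset.sum_congr rfl fun i _ => by ring
  have hpsd : ∀ q : ι → ℝ, 0 ≤ q ⬝ᵥ K *ᵥ q := by
    intro q
    rw [hKK, aux_lap N hN w hw q]
    refine mul_nonneg (by norm_num) (Finset.sum_nonneg fun i _ => Finset.sum_nonneg fun j _ => ?_)
    have := hnn i j; have := (hw i).le; have := (hw j).le
    positivity
  have hD0 : ∀ i, D i = 0 → (N *ᵥ w) i = 0 := by
    intro i hi
    rcases div_eq_zero_iff.1 hi with h | h
    · exact h
    · exact absurd h (hw i).ne'
  have hN0 : ∀ i, D i = 0 → ∀ q : ι → ℝ, (N *ᵥ q) i = 0 := by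
    intro i hi q
    simp [mulVec, dotProduct, hz i (hD0 i hi)]
  have hker : ∀ q : ι → ℝ, K *ᵥ q = 0 → (fun i => D i * x i) ⬝ᵥ q = 0 := by
    intro q hq
    have h0 : q ⬝ᵥ K *ᵥ q = 0 := by rw [hq]; simp
    rw [hKK, aux_lap N hN w hw q] at h0
    have nn : ∀ i j, 0 ≤ N i j * w i * w j * (q i / w i - q j / w j) ^ 2 := by
      intro i j
      have := hnn i j; have := (hw i).le; have := (hw j).le
      positivity
    have h1 : ∑ i, ∑ j, N i j * w i * w j * (q i / w i - q j / w j) ^ 2 = 0 := by linarith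
    have h2 : ∀ i j, N i j ≠ 0 → q i / w i = q j / w j := by
      intro i j hij
      have h3 := (Finset.sum_eq_zero_iff_of_nonneg
        (fun i _ => Finset.sum_nonneg fun j _ => nn i j)).1 h1 i (Finset.mem_univ _)
      have h4 := (Finset.sum_eq_zero_iff_of_nonneg (fun j _ => nn i j)).1 h3 j (Finset.mem_univ _)
      have := (hw i).ne'; have := (hw j).ne'
      have h5 : (q i / w i - q j / w j) ^ 2 = 0 := by
        rcases mul_eq_zero.1 h4 with h | h
        · exfalso
          simp_all
        · exact h
      have := pow_eq_zero_iff (two_ne_zero) |>.1 h5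
      linarith
    obtain ⟨c, hc⟩ := hconn (fun i => q i / w i) h2
    have h3 : (fun i => D i * x i) ⬝ᵥ q = c * (x ⬝ᵥ N *ᵥ w) := by
      simp only [dotProduct, Finset.mul_sum]
      refine Finset.sum_congr rfl fun i _ => ?_
      by_cases h : (N *ᵥ w) i = 0
      · simp [hD, h]
      · have h4 := hc i h
        have := (hw i).ne'
        have h5 : q i = c * w i := by rw [← h4]; field_simp
        rw [h5]; simp only [hD]; field_simp
    rw [h3, hx, mul_zero]
  obtain ⟨y, hy⟩ := aux_range K hK _ hker
  have hA : y ⬝ᵥ K *ᵥ y ≤ ∑ i, D i * x i ^ 2 := by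
    have h1 : ∑ i, D i * x i ^ 2 = ∑ i, (D i * y i ^ 2 - 2 * (y i * (N *ᵥ y) i) +
        w i * ((N *ᵥ y) i) ^ 2 / (N *ᵥ w) i) := by
      refine Finset.sum_congr rfl fun i _ => ?_
      by_cases h : D i = 0
      · simp [h, hN0 i h]
      · have h2 : D i * x i = D i * y i - (N *ᵥ y) i := by
          have := congrFun hy i
          rw [hKq] at this
          exact this.symm
        have h3 : x i = (D i * y i - (N *ᵥ y) i) / D i := by
          rw [← h2]; field_simp
        have h4 : w i * ((N *ᵥ y) i) ^ 2 / (N *ᵥ w) i = ((N *ᵥ y) i) ^ 2 / D i := by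
          simp only [hD]
          have := (hw i).ne'
          field_simp
        rw [h4, h3]
        field_simp
        ring
    rw [h1, hKK, Finset.sum_add_distrib, Finset.sum_sub_distrib, ← Finset.mul_sum]
    have := hineq y
    have e : y ⬝ᵥ N *ᵥ y = ∑ i, y i * (N *ᵥ y) i := rfl
    linarith
  have hB := hpsd (x - y)
  have hC : x ⬝ᵥ K *ᵥ y = ∑ i, D i * x i ^ 2 := by
    rw [hy]; simp only [dotProduct]
    exact Finset.sum_congr rfl fun i _ => by ring
  have hC' : y ⬝ᵥ K *ᵥ x = ∑ i, D i * x i ^ 2 := by rw [aux_symm_dot K hK, hC]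
  simp only [mulVec_sub, sub_dotProduct, dotProduct_sub] at hB
  have := hKK x
  linarith

/-- extension of the weight vector by zero -/
def extz {X : Type*} (w : X → ℝ) : Option X → ℝ := fun o => o.elim 0 w

lemma aux_cs {ι : Type*} [Fintype ι] (M : Matrix ι ι ℝ) (hM : M.IsSymm) (w : ι → ℝ)
    (hww : 0 < w ⬝ᵥ M *ᵥ w) (h : ∀ u, u ⬝ᵥ M *ᵥ w = 0 → u ⬝ᵥ M *ᵥ u ≤ 0) (u : ι → ℝ) :
    (u ⬝ᵥ M *ᵥ u) * (w ⬝ᵥ M *ᵥ w) ≤ (u ⬝ᵥ M *ᵥ w) ^ 2 := by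
  set c := (u ⬝ᵥ M *ᵥ w) / (w ⬝ᵥ M *ᵥ w) with hc
  have hcw : c * (w ⬝ᵥ M *ᵥ w) = u ⬝ᵥ M *ᵥ w := by rw [hc]; field_simp
  have h1 := h (u - c • w) (by
    simp only [sub_dotProduct, smul_dotProduct, smul_eq_mul]; linarith)
  simp only [sub_dotProduct, smul_dotProduct, smul_eq_mul, mulVec_sub, mulVec_smul,
    dotProduct_sub, dotProduct_smul] at h1
  rw [aux_symm_dot M hM w u] at h1
  have h2 : u ⬝ᵥ M *ᵥ u ≤ c * (u ⬝ᵥ M *ᵥ w) := by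
    have : c * (c * (w ⬝ᵥ M *ᵥ w)) = c * (u ⬝ᵥ M *ᵥ w) := by rw [hcw]
    linarith
  calc (u ⬝ᵥ M *ᵥ u) * (w ⬝ᵥ M *ᵥ w) ≤ c * (u ⬝ᵥ M *ᵥ w) * (w ⬝ᵥ M *ᵥ w) :=
        mul_le_mul_of_nonneg_right h2 hww.le
    _ = c * (w ⬝ᵥ M *ᵥ w) * (u ⬝ᵥ M *ᵥ w) := by ring
    _ = _ := by rw [hcw]; ring

lemma aux_ker {ι : Type*} [Fintype ι] (M : Matrix ι ι ℝ) (hM : M.IsSymm) (w : ι → ℝ)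
    (hww : 0 < w ⬝ᵥ M *ᵥ w)
    (h : ∀ u, (u ⬝ᵥ M *ᵥ u) * (w ⬝ᵥ M *ᵥ w) ≤ (u ⬝ᵥ M *ᵥ w) ^ 2)
    (v : ι → ℝ) (hv : v ⬝ᵥ M *ᵥ w = 0) (hvv : v ⬝ᵥ M *ᵥ v = 0) (z : ι → ℝ) :
    z ⬝ᵥ M *ᵥ v = 0 := by
  set p := z ⬝ᵥ M *ᵥ v with hp
  set W := w ⬝ᵥ M *ᵥ w with hW
  set B := (z ⬝ᵥ M *ᵥ w) ^ 2 - (z ⬝ᵥ M *ᵥ z) * W with hB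
  have key : ∀ e : ℝ, 2 * e * p * W ≤ e ^ 2 * B := by
    intro e
    have := h (v + e • z)
    simp only [add_dotProduct, smul_dotProduct, smul_eq_mul, mulVec_add, mulVec_smul,
      dotProduct_add, dotProduct_smul] at this
    rw [aux_symm_dot M hM v z, hv, hvv] at this
    simp only [hB]
    nlinarith
  by_contra hne
  have hB0 : 0 ≤ B := by
    have h1 := key 1
    have h2 := key (-1)
    nlinarith
  have hpW : 0 < (p * W) ^ 2 := by have := hww.ne'; positivity
  have h3 := key (p * W / (B + 1))
  have e1 : 2 * (p * W / (B + 1)) * p * W = 2 * (p * W) ^ 2 / (B + 1) := by ring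
  have e2 : (p * W / (B + 1)) ^ 2 * B = (p * W) ^ 2 / (B + 1) * (B / (B + 1)) := by
    field_simp
  rw [e1, e2] at h3
  have h4 : B / (B + 1) ≤ 1 := by rw [div_le_one (by linarith)]; linarith
  have h5 : 0 < (p * W) ^ 2 / (B + 1) := by positivity
  have e3 : 2 * (p * W) ^ 2 / (B + 1) = 2 * ((p * W) ^ 2 / (B + 1)) := by ring
  rw [e3] at h3
  nlinarith

lemma aux_step2 {X : Type*} [Fintype X] [DecidableEq X] (M : Matrix (Option X) (Option X) ℝ)
    (hM : M.IsSymm) (hnn : ∀ i j, 0 ≤ M (some i) (some j)) (w : X → ℝ) (hw : ∀ i, 0 < w i)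
    (hz : ∀ i, (M *ᵥ extz w) (some i) = 0 → ∀ j, M (some i) j = 0)
    (hconn : ∀ q : X → ℝ, (∀ i j, M (some i) (some j) ≠ 0 → q i = q j) →
      ∃ c, ∀ i, (M *ᵥ extz w) (some i) ≠ 0 → q i = c)
    (hineq : ∀ u, u ⬝ᵥ M *ᵥ u ≤
      ∑ i, w i * ((M *ᵥ u) (some i)) ^ 2 / (M *ᵥ extz w) (some i))
    (u : Option X → ℝ) (hu : u ⬝ᵥ M *ᵥ extz w = 0) : u ⬝ᵥ M *ᵥ u ≤ 0 := by
  set N : Matrix X X ℝ := M.submatrix some some with hNdef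
  have hN : N.IsSymm := hM.submatrix some
  have hsome : ∀ (q : X → ℝ) i, (M *ᵥ extz q) (some i) = (N *ᵥ q) i := by
    intro q i
    simp [mulVec, dotProduct, Fintype.sum_option, extz, hNdef]
  have hdot : ∀ (q : X → ℝ) (v : Option X → ℝ), extz q ⬝ᵥ v = ∑ i, q i * v (some i) := by
    intro q v
    simp [dotProduct, Fintype.sum_option, extz]
  have hqq : ∀ (q r : X → ℝ), extz q ⬝ᵥ M *ᵥ extz r = q ⬝ᵥ N *ᵥ r := by
    intro q r
    rw [hdot]; simp only [hsome]; rfl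
  have h1 : ∀ x : X → ℝ, x ⬝ᵥ N *ᵥ w = 0 → x ⬝ᵥ N *ᵥ x ≤ 0 := by
    intro x hx
    refine aux_step1 N hN (fun i j => hnn i j) w hw ?_ ?_ ?_ x hx
    · intro i hi j
      exact hz i (by rw [hsome]; exact hi) _
    · intro q hq
      obtain ⟨c, hc⟩ := hconn q hq
      exact ⟨c, fun i hi => hc i (by rw [hsome]; exact hi)⟩
    · intro x
      have := hineq (extz x)
      simpa only [hqq, hsome] using this
  set e0 : Option X → ℝ := Pi.single none 1 with he0
  set b : X → ℝ := fun i => (M *ᵥ e0) (some i) with hb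
  have hbq : ∀ q : X → ℝ, extz q ⬝ᵥ M *ᵥ e0 = b ⬝ᵥ q := by
    intro q; rw [hdot]; simp only [dotProduct, hb]
    exact Finset.sum_congr rfl fun i _ => by ring
  have hker : ∀ q, N *ᵥ q = 0 → b ⬝ᵥ q = 0 := by
    intro q hq
    have h2 : ∀ l : ℝ, e0 ⬝ᵥ M *ᵥ e0 + 2 * l * (b ⬝ᵥ q) ≤
        ∑ i, w i * (b i) ^ 2 / (M *ᵥ extz w) (some i) := by
      intro l
      have h3 := hineq (e0 + l • extz q)
      have h4 : ∀ i, (M *ᵥ (e0 + l • extz q)) (some i) = b i := by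
        intro i
        rw [mulVec_add, mulVec_smul, Pi.add_apply, Pi.smul_apply, hsome, hq]
        simp [hb]
      simp only [h4] at h3
      refine le_trans (le_of_eq ?_) h3
      simp only [add_dotProduct, smul_dotProduct, smul_eq_mul, mulVec_add, mulVec_smul,
        dotProduct_add, dotProduct_smul]
      rw [aux_symm_dot M hM e0 (extz q), hqq, hq, hbq]
      simp; ring
    by_contra hne
    set G := ∑ i, w i * (b i) ^ 2 / (M *ᵥ extz w) (some i)
    have h5 := h2 ((G - e0 ⬝ᵥ M *ᵥ e0 + 1) / (2 * (b ⬝ᵥ q)))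
    have h6 : 2 * ((G - e0 ⬝ᵥ M *ᵥ e0 + 1) / (2 * (b ⬝ᵥ q))) * (b ⬝ᵥ q) =
        G - e0 ⬝ᵥ M *ᵥ e0 + 1 := by field_simp
    rw [h6] at h5
    linarith
  obtain ⟨y, hy⟩ := aux_range N hN b hker
  set u0 : Option X → ℝ := e0 - extz y with hu0
  have hu0s : ∀ i, (M *ᵥ u0) (some i) = 0 := by
    intro i
    rw [hu0, mulVec_sub, Pi.sub_apply, hsome, hy]
    simp [hb]
  have hu00 : u0 ⬝ᵥ M *ᵥ u0 ≤ 0 := by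
    have := hineq u0
    simpa [hu0s] using this
  have hq0 : ∀ q : X → ℝ, extz q ⬝ᵥ M *ᵥ u0 = 0 := by
    intro q; rw [hdot]; simp [hu0s]
  set x : X → ℝ := fun i => u (some i) + u none * y i with hx
  have hdec : u = u none • u0 + extz x := by
    ext o
    cases o with
    | none => simp [hu0, he0, extz]
    | some i => simp [hu0, he0, extz, hx]
  have hxw : x ⬝ᵥ N *ᵥ w = 0 := by
    rw [hdec] at hu
    rw [← hqq]
    rw [add_dotProduct, smul_dotProduct, aux_symm_dot M hM u0, hq0] at hu
    simpa using hu
  have h7 := h1 x hxw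
  rw [hdec]
  generalize u none = t
  simp only [add_dotProduct, smul_dotProduct, smul_eq_mul, mulVec_add, mulVec_smul,
    dotProduct_add, dotProduct_smul]
  rw [aux_symm_dot M hM u0 (extz x), hq0, hqq]
  nlinarith [mul_nonneg (sq_nonneg t) (neg_nonneg.2 hu00)]

/-- weighted number of independent sets of size `j` containing `S` -/
def aS (Indep : Finset X → Prop) (ω : X → ℝ) (S : Finset X) (j : ℕ) : ℝ :=
  ∑ U ∈ Finset.univ.filter (fun U : Finset X => Indep U ∧ S ⊆ U ∧ U.card = j), ∏ x ∈ U \ S, ω x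

lemma aS_dc (Indep : Finset X → Prop) (ω : X → ℝ) (T : Finset X) (j : ℕ) :
    ∑ z, ω z * (if z ∈ T then 0 else aS Indep ω (insert z T) j) =
      ((j : ℝ) - T.card) * aS Indep ω T j := by
  unfold aS
  have h1 : ∀ z, ω z * (if z ∈ T then 0 else ∑ U ∈ Finset.univ.filter
      (fun U : Finset X => Indep U ∧ insert z T ⊆ U ∧ U.card = j), ∏ x ∈ U \ insert z T, ω x) =
      ∑ U ∈ Finset.univ.filter (fun U : Finset X => Indep U ∧ T ⊆ U ∧ U.card = j),
        if z ∈ U \ T then ∏ x ∈ U \ T, ω x else 0 := by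
    intro z
    by_cases hz : z ∈ T
    · simp [hz]
    · rw [if_neg hz, ← Finset.sum_filter, Finset.mul_sum]
      refine Finset.sum_congr ?_ ?_
      · ext U
        simp only [Finset.mem_filter, Finset.mem_univ, true_and, Finset.insert_subset_iff,
          Finset.mem_sdiff]
        tauto
      · intro U hU
        have hzU : z ∈ U \ T := (Finset.mem_filter.1 hU).2
        rw [Finset.sdiff_insert, Finset.mul_prod_erase _ _ hzU]
  simp only [h1]
  rw [Finset.sum_comm, Finset.mul_sum]
  refine Finset.sum_congr rfl fun U hU => ?_
  simp only [Finset.mem_filter, Finset.mem_univ, true_and] at hU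
  rw [← Finset.sum_filter]
  rw [Finset.sum_const, nsmul_eq_mul]
  congr 1
  have : Finset.univ.filter (fun z => z ∈ U \ T) = U \ T := by ext; simp
  rw [this, Finset.card_sdiff_of_subset hU.2.1, hU.2.2, Nat.cast_sub]
  rw [← hU.2.2]; exact Finset.card_le_card hU.2.1

/-- The Hessian-type matrix. -/
def HM (Indep : Finset X → Prop) (ω : X → ℝ) (r : ℕ) (m : ℝ) (S : Finset X) :
    Matrix (Option X) (Option X) ℝ := fun i j =>
  match i, j with
  | none, none => m * (m - 1) * aS Indep ω S r
  | none, some z => (m - 1) * (if z ∈ S then 0 else aS Indep ω (insert z S) (r + 1))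
  | some z, none => (m - 1) * (if z ∈ S then 0 else aS Indep ω (insert z S) (r + 1))
  | some z, some v => if z ∈ S ∨ v ∈ S ∨ z = v then 0 else
      aS Indep ω (insert z (insert v S)) (r + 2)

lemma HM_symm (Indep : Finset X → Prop) (ω : X → ℝ) (r : ℕ) (m : ℝ) (S : Finset X) :
    (HM Indep ω r m S).IsSymm := by
  ext i j
  rcases i with _ | z <;> rcases j with _ | v <;> simp only [Matrix.transpose_apply, HM]
  rw [Finset.insert_comm]
  exact if_congr (by tauto) rfl rfl

lemma HM_A (Indep : Finset X → Prop) (ω : X → ℝ) (r : ℕ) (m : ℝ) (S : Finset X)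
    (i j : Option X) :
    ∑ y ∈ Sᶜ, ω y * HM Indep ω r m (insert y S) i j =
      ((r : ℝ) - S.card) * HM Indep ω r m S i j := by
  have ext0 : ∀ f : X → ℝ, ∑ y ∈ Sᶜ, f y = ∑ y, if y ∈ S then 0 else f y := by
    intro f
    have : ∀ y, (if y ∈ S then 0 else f y) = if y ∈ Sᶜ then f y else 0 := by
      intro y; by_cases h : y ∈ S <;> simp [h]
    simp only [this, Finset.sum_ite_mem, Finset.univ_inter]
  rw [ext0]
  rcases i with _ | z <;> rcases j with _ | v <;> simp only [HM]
  · have := aS_dc Indep ω S r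
    rw [show ((r : ℝ) - S.card) * (m * (m - 1) * aS Indep ω S r) =
      m * (m - 1) * (((r : ℝ) - S.card) * aS Indep ω S r) by ring, ← this, Finset.mul_sum]
    refine Finset.sum_congr rfl fun y _ => ?_
    split_ifs <;> ring
  · by_cases hv : v ∈ S
    · simp [hv]
    · have := aS_dc Indep ω (insert v S) (r + 1)
      rw [Finset.card_insert_of_notMem hv] at this
      push_cast at this
      rw [if_neg hv, show ((r : ℝ) - S.card) * ((m - 1) * aS Indep ω (insert v S) (r + 1)) =
        (m - 1) * (((r : ℝ) + 1 - (S.card + 1)) * aS Indep ω (insert v S) (r + 1)) by ring,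
        ← this, Finset.mul_sum]
      refine Finset.sum_congr rfl fun y _ => ?_
      rw [Finset.insert_comm y v]
      by_cases h1 : y ∈ S <;> by_cases h2 : y = v <;> simp [h1, h2, hv] <;> grind
  · by_cases hv : z ∈ S
    · simp [hv]
    · have := aS_dc Indep ω (insert z S) (r + 1)
      rw [Finset.card_insert_of_notMem hv] at this
      push_cast at this
      rw [if_neg hv, show ((r : ℝ) - S.card) * ((m - 1) * aS Indep ω (insert z S) (r + 1)) =
        (m - 1) * (((r : ℝ) + 1 - (S.card + 1)) * aS Indep ω (insert z S) (r + 1)) by ring,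
        ← this, Finset.mul_sum]
      refine Finset.sum_congr rfl fun y _ => ?_
      rw [Finset.insert_comm y z]
      by_cases h1 : y ∈ S <;> by_cases h2 : y = z <;> simp [h1, h2, hv] <;> grind
  · by_cases hv : z ∈ S ∨ v ∈ S ∨ z = v
    · rw [if_pos hv, mul_zero]
      refine Finset.sum_eq_zero fun y _ => ?_
      grind
    · have := aS_dc Indep ω (insert z (insert v S)) (r + 2)
      rw [Finset.card_insert_of_notMem (by grind), Finset.card_insert_of_notMem (by grind)] at this
      push_cast at this
      rw [if_neg hv, show ((r : ℝ) - S.card) = ((r : ℝ) + 2 - (S.card + 1 + 1)) by ring, ← this]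
      refine Finset.sum_congr rfl fun y _ => ?_
      have e : insert z (insert v (insert y S)) = insert y (insert z (insert v S)) := by grind
      rw [e]
      grind

lemma HM_B (Indep : Finset X → Prop) (ω : X → ℝ) (r : ℕ) (m : ℝ) (S : Finset X) (y : X)
    (hy : y ∉ S) (i : Option X) :
    (HM Indep ω r m (insert y S) *ᵥ extz ω) i =
      ((r : ℝ) - S.card) * HM Indep ω r m S (some y) i := by
  simp only [mulVec, dotProduct, Fintype.sum_option, extz, Option.elim, mul_zero, zero_add]
  rcases i with _ | v <;> simp only [HM]
  · have := aS_dc Indep ω (insert y S) (r + 1)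
    rw [Finset.card_insert_of_notMem hy] at this
    push_cast at this
    rw [if_neg hy, show ((r : ℝ) - S.card) * ((m - 1) * aS Indep ω (insert y S) (r + 1)) =
        (m - 1) * (((r : ℝ) + 1 - (S.card + 1)) * aS Indep ω (insert y S) (r + 1)) by ring,
        ← this, Finset.mul_sum]
    refine Finset.sum_congr rfl fun z _ => ?_
    ring
  · by_cases hv : y ∈ S ∨ v ∈ S ∨ y = v
    · rw [if_pos hv, mul_zero]
      refine Finset.sum_eq_zero fun z _ => ?_
      grind
    · have := aS_dc Indep ω (insert y (insert v S)) (r + 2)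
      rw [Finset.card_insert_of_notMem (by grind), Finset.card_insert_of_notMem (by grind)] at this
      push_cast at this
      rw [if_neg hv, show ((r : ℝ) - S.card) = ((r : ℝ) + 2 - (S.card + 1 + 1)) by ring, ← this]
      refine Finset.sum_congr rfl fun z _ => ?_
      have e : insert v (insert z (insert y S)) = insert z (insert y (insert v S)) := by grind
      rw [e]
      grind

lemma HM_B' (Indep : Finset X → Prop) (ω : X → ℝ) (r : ℕ) (m : ℝ) (S : Finset X) (y : X) :
    (HM Indep ω r m S *ᵥ extz ω) (some y) =
      if y ∈ S then 0 else ((r : ℝ) + 1 - S.card) * aS Indep ω (insert y S) (r + 2) := by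
  simp only [mulVec, dotProduct, Fintype.sum_option, extz, Option.elim, mul_zero, zero_add, HM]
  by_cases hy : y ∈ S
  · simp [hy]
  · have := aS_dc Indep ω (insert y S) (r + 2)
    rw [Finset.card_insert_of_notMem hy] at this
    push_cast at this
    rw [if_neg hy, show (r : ℝ) + 1 - S.card = r + 2 - (S.card + 1) by ring, ← this]
    refine Finset.sum_congr rfl fun z _ => ?_
    rw [Finset.insert_comm]
    grind

lemma HM_A' (Indep : Finset X → Prop) (ω : X → ℝ) (r : ℕ) (m : ℝ) (S : Finset X)
    (u v : Option X → ℝ) :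
    ∑ y ∈ Sᶜ, ω y * (u ⬝ᵥ HM Indep ω r m (insert y S) *ᵥ v) =
      ((r : ℝ) - S.card) * (u ⬝ᵥ HM Indep ω r m S *ᵥ v) := by
  have e : ∑ y ∈ Sᶜ, ω y • HM Indep ω r m (insert y S) =
      ((r : ℝ) - S.card) • HM Indep ω r m S := by
    ext i j
    rw [Matrix.sum_apply]
    simpa using HM_A Indep ω r m S i j
  have h2 := congrArg (fun A : Matrix (Option X) (Option X) ℝ => u ⬝ᵥ A *ᵥ v) e
  simp only [Matrix.sum_mulVec, dotProduct_sum, Matrix.smul_mulVec, dotProduct_smul,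
    smul_eq_mul] at h2
  exact h2

/-- bundled matroid hypotheses -/
structure MatHyp (Indep : Finset X → Prop) : Prop where
  hered : ∀ S T : Finset X, S ⊆ T → Indep T → Indep S
  exch : ∀ S T : Finset X, Indep S → Indep T → S.card < T.card →
      ∃ x ∈ T, x ∉ S ∧ Indep (insert x S)

lemma mat_extend {Indep : Finset X → Prop} (hI : MatHyp Indep) (B : Finset X) (hB : Indep B)
    (d : ℕ) : ∀ (T : Finset X), Indep T → T.card + d ≤ B.card →
    ∃ U, Indep U ∧ T ⊆ U ∧ U.card = T.card + d := by
  induction d with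
  | zero => exact fun T hT _ => ⟨T, hT, subset_rfl, rfl⟩
  | succ d ih =>
    intro T hT hc
    obtain ⟨x, hx, hxT, hi⟩ := hI.exch T B hT hB (by omega)
    have hcard := Finset.card_insert_of_notMem hxT
    obtain ⟨U, h1, h2, h3⟩ := ih (insert x T) hi (by omega)
    exact ⟨U, h1, (Finset.subset_insert _ _).trans h2, by omega⟩

lemma aS_nonneg (Indep : Finset X → Prop) (ω : X → ℝ) (hω : ∀ x, 0 < ω x) (S : Finset X) (j : ℕ) :
    0 ≤ aS Indep ω S j :=
  Finset.sum_nonneg fun _ _ => Finset.prod_nonneg fun x _ => (hω x).le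

lemma aS_pos {Indep : Finset X → Prop} (hI : MatHyp Indep) (ω : X → ℝ) (hω : ∀ x, 0 < ω x)
    (B : Finset X) (hB : Indep B) (S : Finset X) (hS : Indep S) (j : ℕ) (h1 : S.card ≤ j)
    (h2 : j ≤ B.card) : 0 < aS Indep ω S j := by
  obtain ⟨U, h3, h4, h5⟩ := mat_extend hI B hB (j - S.card) S hS (by omega)
  refine Finset.sum_pos (fun _ _ => Finset.prod_pos fun x _ => hω x) ⟨U, ?_⟩
  simp only [Finset.mem_filter, Finset.mem_univ, true_and]
  exact ⟨h3, h4, by omega⟩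

lemma aS_zero {Indep : Finset X → Prop} (hI : MatHyp Indep) (ω : X → ℝ)
    (S : Finset X) (hS : ¬ Indep S) (j : ℕ) : aS Indep ω S j = 0 := by
  unfold aS
  rw [Finset.filter_eq_empty_iff.2, Finset.sum_empty]
  rintro U - ⟨h1, h2, -⟩
  exact hS (hI.hered _ _ h2 h1)

lemma aS_self {Indep : Finset X → Prop} (ω : X → ℝ)
    (S : Finset X) (hS : Indep S) (j : ℕ) (hj : S.card = j) : aS Indep ω S j = 1 := by
  unfold aS
  have : Finset.univ.filter (fun U : Finset X => Indep U ∧ S ⊆ U ∧ U.card = j) = {S} := by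
    ext U
    simp only [Finset.mem_filter, Finset.mem_univ, true_and, Finset.mem_singleton]
    constructor
    · rintro ⟨-, h1, h2⟩
      exact (Finset.eq_of_subset_of_card_le h1 (by omega)).symm
    · rintro rfl
      exact ⟨hS, subset_rfl, hj⟩
  rw [this]; simp

lemma HM_ww_pos {Indep : Finset X → Prop} (hI : MatHyp Indep) (ω : X → ℝ) (hω : ∀ x, 0 < ω x)
    (B : Finset X) (hB : Indep B) (r : ℕ) (hr : r + 2 ≤ B.card) (m : ℝ)
    (S : Finset X) (hS : Indep S) (hSr : S.card ≤ r) :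
    0 < extz ω ⬝ᵥ HM Indep ω r m S *ᵥ extz ω := by
  have e : extz ω ⬝ᵥ HM Indep ω r m S *ᵥ extz ω =
      ∑ y, ω y * (HM Indep ω r m S *ᵥ extz ω) (some y) := by
    rw [dotProduct, Fintype.sum_option]; simp [extz]
  rw [e]
  have hd : (0 : ℝ) < r + 1 - S.card := by
    have : (S.card : ℝ) ≤ r := by exact_mod_cast hSr
    linarith
  refine Finset.sum_pos' (fun y _ => mul_nonneg (hω y).le ?_) ?_
  · rw [HM_B']
    split_ifs
    · exact le_rfl
    · exact mul_nonneg hd.le (aS_nonneg _ _ hω _ _)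
  · obtain ⟨y, -, hy, hyi⟩ := hI.exch S B hS hB (by omega)
    refine ⟨y, Finset.mem_univ _, mul_pos (hω y) ?_⟩
    rw [HM_B', if_neg hy]
    refine mul_pos hd (aS_pos hI ω hω B hB _ hyi _ ?_ hr)
    rw [Finset.card_insert_of_notMem hy]; omega

lemma class_ineq (C : Finset X) (g : X → Finset X) (x : X → ℝ) :
    (∑ y ∈ C, x y) ^ 2 ≤ C.card * ∑ y ∈ C, x y * ∑ z ∈ C.filter (fun z => g z = g y), x z := by
  have h1 : ∑ y ∈ C, x y = ∑ c ∈ C.image g, ∑ y ∈ C.filter (fun z => g z = c), x y :=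
    (Finset.sum_fiberwise_of_maps_to (fun y hy => Finset.mem_image_of_mem g hy) _).symm
  have h2 : ∑ y ∈ C, x y * ∑ z ∈ C.filter (fun z => g z = g y), x z =
      ∑ c ∈ C.image g, (∑ y ∈ C.filter (fun z => g z = c), x y) ^ 2 := by
    rw [← Finset.sum_fiberwise_of_maps_to (fun y hy => Finset.mem_image_of_mem g hy)]
    refine Finset.sum_congr rfl fun c _ => ?_
    rw [sq, Finset.sum_mul]
    refine Finset.sum_congr rfl fun y hy => ?_
    rw [(Finset.mem_filter.1 hy).2]
  rw [h2, h1]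
  refine sq_sum_le_card_mul_sum_sq.trans ?_
  refine mul_le_mul_of_nonneg_right ?_ (Finset.sum_nonneg fun _ _ => sq_nonneg _)
  exact_mod_cast Finset.card_image_le

lemma par_iff {Indep : Finset X → Prop} (hI : MatHyp Indep) (S : Finset X) (y z : X)
    (hy : y ∈ mCont Indep S) (hz : z ∈ mCont Indep S) :
    mParClass Indep S z = mParClass Indep S y ↔ (y = z ∨ ¬ Indep (insert y (insert z S))) := by
  have mc : ∀ a, a ∈ mCont Indep S ↔ a ∉ S ∧ Indep (insert a S) := by
    intro a; simp [mCont]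
  have tr : ∀ a b c, a ∈ mCont Indep S → b ∈ mCont Indep S → c ∈ mCont Indep S →
      (a = b ∨ ¬ Indep (insert a (insert b S))) → (b = c ∨ ¬ Indep (insert b (insert c S))) →
      (a = c ∨ ¬ Indep (insert a (insert c S))) := by
    intro a b c ha hb hc hab hbc
    by_contra hcon
    push Not at hcon
    rw [mc] at ha hb hc
    have hac : a ∉ insert c S := by grind
    obtain ⟨v, h1, h2, h3⟩ := hI.exch (insert b S) (insert a (insert c S)) hb.2 hcon.2 (by
      rw [Finset.card_insert_of_notMem hb.1, Finset.card_insert_of_notMem hac,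
        Finset.card_insert_of_notMem hc.1]; omega)
    simp only [Finset.mem_insert] at h1 h2
    rcases h1 with rfl | rfl | h1
    · rcases hab with rfl | h
      · exact h2 (Or.inl rfl)
      · exact h h3
    · rcases hbc with rfl | h
      · exact h2 (Or.inl rfl)
      · exact h (by rwa [Finset.insert_comm])
    · exact h2 (Or.inr h1)
  have sy : ∀ a b, (a = b ∨ ¬ Indep (insert a (insert b S))) →
      (b = a ∨ ¬ Indep (insert b (insert a S))) := by
    intro a b h
    rw [Finset.insert_comm, eq_comm]; exact h
  constructor
  · intro h
    have : y ∈ mParClass Indep S y := by simp [mParClass, hy]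
    rw [← h] at this
    simpa [mParClass, hy] using this
  · intro h
    ext a
    simp only [mParClass, Finset.mem_filter]
    constructor
    · rintro ⟨ha, h1⟩
      exact ⟨ha, tr a z y ha hz hy h1 (sy _ _ h)⟩
    · rintro ⟨ha, h1⟩
      exact ⟨ha, tr a y z ha hy hz h1 h⟩

/-- entries at the bottom level -/
lemma HM_base {Indep : Finset X → Prop} (hI : MatHyp Indep) (ω : X → ℝ) (r : ℕ) (m : ℝ)
    (S : Finset X) (hS : Indep S) (hSr : S.card = r) (u v : Option X → ℝ) :
    u ⬝ᵥ HM Indep ω r m S *ᵥ v = m * (m - 1) * u none * v none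
      + (m - 1) * (u none * ∑ y ∈ mCont Indep S, v (some y) +
        v none * ∑ y ∈ mCont Indep S, u (some y))
      + ((∑ y ∈ mCont Indep S, u (some y)) * (∑ y ∈ mCont Indep S, v (some y))
        - ∑ y ∈ mCont Indep S, u (some y) * ∑ z ∈ mParClass Indep S y, v (some z)) := by
  have mc : ∀ a, a ∈ mCont Indep S ↔ a ∉ S ∧ Indep (insert a S) := by
    intro a; simp [mCont]
  have h1 : ∀ z, (if z ∈ S then 0 else aS Indep ω (insert z S) (r + 1)) =
      if z ∈ mCont Indep S then 1 else 0 := by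
    intro z
    by_cases hz : z ∈ S
    · simp [hz, mc]
    · by_cases hi : Indep (insert z S)
      · rw [aS_self ω _ hi _ (by rw [Finset.card_insert_of_notMem hz, hSr])]
        simp [hz, mc, hi]
      · rw [aS_zero hI ω _ hi]
        simp [mc, hi]
  have h2 : ∀ z y, (if z ∈ S ∨ y ∈ S ∨ z = y then 0 else
      aS Indep ω (insert z (insert y S)) (r + 2)) =
      (if z ∈ mCont Indep S then 1 else 0) * (if y ∈ mCont Indep S then 1 else 0) -
      (if z ∈ mCont Indep S then 1 else 0) * (if y ∈ mParClass Indep S z then 1 else 0) := by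
    intro z y
    by_cases hc : z ∈ S ∨ y ∈ S ∨ z = y
    · rw [if_pos hc]
      rcases hc with hc | hc | rfl
      · simp [mc, hc]
      · simp [mParClass, mc, hc]
      · simp [mParClass]
    · rw [if_neg hc]
      push Not at hc
      by_cases hi : Indep (insert z (insert y S))
      · have e1 : Indep (insert y S) := hI.hered _ _ (Finset.subset_insert _ _) hi
        have hi' := hi
        rw [Finset.insert_comm] at hi'
        have e2 : Indep (insert z S) := hI.hered _ _ (Finset.subset_insert _ _) hi'
        rw [aS_self ω _ hi _ (by
          rw [Finset.card_insert_of_notMem (by grind), Finset.card_insert_of_notMem hc.2.1, hSr])]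
        simp [mc, hc, e1, e2, mParClass, hi', hc.2.2.symm]
      · rw [aS_zero hI ω _ hi]
        rw [Finset.insert_comm] at hi
        simp [mParClass, hi]
  have s1 : ∀ (A : Finset X) (f : X → ℝ), ∑ y, (if y ∈ A then 1 else 0) * f y = ∑ y ∈ A, f y := by
    intro A f
    simp
  simp only [dotProduct, mulVec, Fintype.sum_option, HM, h1, h2, aS_self ω S hS r hSr]
  have t1 : ∑ z, (m - 1) * (if z ∈ mCont Indep S then 1 else 0) * v (some z) =
      (m - 1) * ∑ z ∈ mCont Indep S, v (some z) := by
    rw [← s1 (mCont Indep S), Finset.mul_sum]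
    exact Finset.sum_congr rfl fun _ _ => by ring
  have t2 : ∀ z, ∑ y, ((if z ∈ mCont Indep S then (1:ℝ) else 0) *
        (if y ∈ mCont Indep S then 1 else 0) -
      (if z ∈ mCont Indep S then 1 else 0) * (if y ∈ mParClass Indep S z then 1 else 0)) * v (some y)
      = (if z ∈ mCont Indep S then 1 else 0) * (∑ y ∈ mCont Indep S, v (some y) -
        ∑ y ∈ mParClass Indep S z, v (some y)) := by
    intro z
    rw [← s1 (mCont Indep S), ← s1 (mParClass Indep S z), ← Finset.sum_sub_distrib, Finset.mul_sum]
    exact Finset.sum_congr rfl fun _ _ => by ring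
  simp only [t1, t2]
  have t3 : ∑ z, u (some z) * ((m - 1) * (if z ∈ mCont Indep S then 1 else 0) * v none +
      (if z ∈ mCont Indep S then 1 else 0) * (∑ y ∈ mCont Indep S, v (some y) -
        ∑ y ∈ mParClass Indep S z, v (some y))) =
      (m - 1) * v none * (∑ y ∈ mCont Indep S, u (some y)) +
      ((∑ y ∈ mCont Indep S, u (some y)) * (∑ y ∈ mCont Indep S, v (some y))
        - ∑ y ∈ mCont Indep S, u (some y) * ∑ z ∈ mParClass Indep S y, v (some z)) := by
    generalize ∑ y ∈ mCont Indep S, v (some y) = V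
    rw [Finset.sum_mul, Finset.mul_sum, ← Finset.sum_sub_distrib, ← Finset.sum_add_distrib,
      ← s1 (mCont Indep S)]
    exact Finset.sum_congr rfl fun _ _ => by ring
  rw [t3]
  ring

lemma HM_Bdot (Indep : Finset X → Prop) (ω : X → ℝ) (r : ℕ) (m : ℝ) (S : Finset X) (y : X)
    (hy : y ∉ S) (u : Option X → ℝ) :
    u ⬝ᵥ HM Indep ω r m (insert y S) *ᵥ extz ω =
      ((r : ℝ) - S.card) * (HM Indep ω r m S *ᵥ u) (some y) := by
  have e : HM Indep ω r m (insert y S) *ᵥ extz ω =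
      fun i => ((r : ℝ) - S.card) * HM Indep ω r m S (some y) i :=
    funext fun i => HM_B Indep ω r m S y hy i
  rw [e]
  simp only [dotProduct, mulVec, Finset.mul_sum]
  exact Finset.sum_congr rfl fun i _ => by ring

lemma HM_zero {Indep : Finset X → Prop} (hI : MatHyp Indep) (ω : X → ℝ) (r : ℕ) (m : ℝ)
    (S : Finset X) (hS : ¬ Indep S) : HM Indep ω r m S = 0 := by
  have h1 : ∀ z, ¬ Indep (insert z S) := fun z h => hS (hI.hered _ _ (Finset.subset_insert _ _) h)
  have h2 : ∀ z v, ¬ Indep (insert z (insert v S)) := fun z v h =>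
    h1 v (hI.hered _ _ (Finset.subset_insert _ _) h)
  ext i j
  rcases i with _ | z <;> rcases j with _ | v <;>
    simp [HM, aS_zero hI ω _ hS, aS_zero hI ω _ (h1 _), aS_zero hI ω _ (h2 _ _)]

lemma cont_card (Indep : Finset X → Prop) (S : Finset X) :
    ((mCont Indep S).card : ℝ) ≤ (Fintype.card X : ℝ) - S.card := by
  have h : (mCont Indep S) ⊆ Sᶜ := by
    intro y hy
    simp only [mCont, Finset.mem_filter] at hy
    simp [hy.2.1]
  have h1 := Finset.card_le_card h
  have h2 := Finset.card_add_card_compl S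
  have : ((S.card + Sᶜ.card : ℕ) : ℝ) = Fintype.card X := by exact_mod_cast h2
  push_cast at this
  have : ((mCont Indep S).card : ℝ) ≤ Sᶜ.card := by exact_mod_cast h1
  linarith

lemma HM_hyp {Indep : Finset X → Prop} (hI : MatHyp Indep) (ω : X → ℝ) (hω : ∀ x, 0 < ω x)
    (B : Finset X) (hB : Indep B) (r : ℕ) (hr : r + 2 ≤ B.card) (d : ℕ) :
    ∀ (S : Finset X), Indep S → S.card + d = r → ∀ u : Option X → ℝ,
    (u ⬝ᵥ HM Indep ω r ((Fintype.card X : ℝ) - r) S *ᵥ u) *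
      (extz ω ⬝ᵥ HM Indep ω r ((Fintype.card X : ℝ) - r) S *ᵥ extz ω) ≤
      (u ⬝ᵥ HM Indep ω r ((Fintype.card X : ℝ) - r) S *ᵥ extz ω) ^ 2 := by
  set m : ℝ := (Fintype.card X : ℝ) - r with hm
  have hm2 : 2 ≤ m := by
    have h1 : r + 2 ≤ Fintype.card X := hr.trans (Finset.card_le_univ B)
    have : ((r + 2 : ℕ) : ℝ) ≤ Fintype.card X := by exact_mod_cast h1
    push_cast at this
    linarith
  have mc : ∀ (S : Finset X) a, a ∈ mCont Indep S ↔ a ∉ S ∧ Indep (insert a S) := by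
    intro S a; simp [mCont]
  induction d with
  | zero =>
    intro S hS hSr
    have hww := HM_ww_pos hI ω hω B hB r hr m S hS (by omega)
    have hsym := HM_symm Indep ω r m S
    refine aux_cs _ hsym _ hww ?_
    intro u hu
    set l : (Option X → ℝ) → ℝ := fun u => m * u none + ∑ y ∈ mCont Indep S, u (some y) with hl
    have hl0 : ∀ v, l v = 0 → v ⬝ᵥ HM Indep ω r m S *ᵥ v ≤ 0 := by
      intro v hv
      rw [HM_base hI ω r m S hS (by omega)]
      have h1 := class_ineq (mCont Indep S) (mParClass Indep S) (fun y => v (some y))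
      have h2 : ∀ y ∈ mCont Indep S,
          (mCont Indep S).filter (fun z => mParClass Indep S z = mParClass Indep S y) =
          mParClass Indep S y := by
        intro y hy
        ext z
        simp only [Finset.mem_filter]
        constructor
        · rintro ⟨hz, h⟩
          have := (par_iff hI S z y hz hy).1 h.symm
          exact Finset.mem_filter.2 ⟨hz, this⟩
        · intro h
          have h' := Finset.mem_filter.1 h
          exact ⟨h'.1, ((par_iff hI S z y h'.1 hy).2 h'.2).symm⟩
      have h3 : ∑ y ∈ mCont Indep S, v (some y) *
          ∑ z ∈ (mCont Indep S).filter (fun z => mParClass Indep S z = mParClass Indep S y),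
            v (some z) = ∑ y ∈ mCont Indep S, v (some y) * ∑ z ∈ mParClass Indep S y, v (some z) :=
        Finset.sum_congr rfl fun y hy => by rw [h2 y hy]
      rw [h3] at h1
      simp only [hl] at hv
      have hc := cont_card Indep S
      have hSr' : (S.card : ℝ) = r := by exact_mod_cast (by omega : S.card = r)
      rw [hSr', ← hm] at hc
      generalize ∑ y ∈ mCont Indep S, v (some y) * ∑ z ∈ mParClass Indep S y, v (some z) = E at *
      generalize ∑ y ∈ mCont Indep S, v (some y) = L at *
      have hc0 : (0 : ℝ) < (mCont Indep S).card := by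
        obtain ⟨y, -, hy, hyi⟩ := hI.exch S B hS hB (by omega)
        exact_mod_cast Finset.card_pos.2 ⟨y, (mc S y).2 ⟨hy, hyi⟩⟩
      generalize ((mCont Indep S).card : ℝ) = N at *
      generalize v none = t at *
      have hL : L = - (m * t) := by linarith
      subst hL
      have hmE : (m * t) ^ 2 ≤ m * E := by
        have hE : 0 ≤ E ∨ E < 0 := le_or_gt 0 E
        rcases hE with hE | hE
        · nlinarith
        · nlinarith [sq_nonneg (m * t), mul_pos hc0 (neg_pos.2 hE)]
      have : m * t ^ 2 ≤ E := by
        have : m * (m * t ^ 2) ≤ m * E := by nlinarith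
        exact le_of_mul_le_mul_left this (by linarith)
      nlinarith
    have hlw : 0 < l (extz ω) := by
      simp only [hl, extz, Option.elim, mul_zero, zero_add]
      refine Finset.sum_pos (fun y _ => hω y) ?_
      obtain ⟨y, -, hy, hyi⟩ := hI.exch S B hS hB (by omega)
      exact ⟨y, (mc S y).2 ⟨hy, hyi⟩⟩
    set s : ℝ := - l u / l (extz ω) with hs
    have h1 := hl0 (u + s • extz ω) (by
      have : l (u + s • extz ω) = l u + s * l (extz ω) := by
        simp only [hl, Pi.add_apply, Pi.smul_apply, smul_eq_mul, Finset.sum_add_distrib,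
          ← Finset.mul_sum]
        ring
      rw [this, hs]; field_simp; ring)
    simp only [add_dotProduct, smul_dotProduct, smul_eq_mul, mulVec_add, mulVec_smul,
      dotProduct_add, dotProduct_smul] at h1
    rw [aux_symm_dot _ hsym (extz ω) u, hu] at h1
    nlinarith [mul_nonneg (sq_nonneg s) hww.le]
  | succ d ih =>
    intro S hS hSr
    have hww := HM_ww_pos hI ω hω B hB r hr m S hS (by omega)
    have hsym := HM_symm Indep ω r m S
    have hdpos : (0 : ℝ) < r - S.card := by
      have : ((S.card + (d + 1) : ℕ) : ℝ) = r := by exact_mod_cast hSr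
      push_cast at this
      have h0 : (0 : ℝ) ≤ d := Nat.cast_nonneg _
      linarith
    refine aux_cs _ hsym _ hww ?_
    have hMw : ∀ i, (HM Indep ω r m S *ᵥ extz ω) (some i) ≠ 0 ↔ (i ∉ S ∧ Indep (insert i S)) := by
      intro i
      rw [HM_B']
      constructor
      · intro h
        by_cases hi : i ∈ S
        · simp [hi] at h
        · refine ⟨hi, ?_⟩
          by_contra hc
          rw [aS_zero hI ω _ hc] at h
          simp at h
      · rintro ⟨hi, hii⟩
        rw [if_neg hi]
        have := aS_pos hI ω hω B hB _ hii (r + 2)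
          (by rw [Finset.card_insert_of_notMem hi]; omega) hr
        exact (mul_pos (by linarith) this).ne'
    refine fun u hu => aux_step2 _ hsym ?_ ω hω ?_ ?_ ?_ u hu
    · intro i j
      simp only [HM]
      split_ifs
      · exact le_rfl
      · exact aS_nonneg _ _ hω _ _
    · intro i hi j
      by_cases hiS : i ∈ S
      · rcases j with _ | j <;> simp [HM, hiS]
      · have hii : ¬ Indep (insert i S) := by
          intro h
          exact (hMw i).2 ⟨hiS, h⟩ hi
        have h2 : ∀ j, ¬ Indep (insert i (insert j S)) := by
          intro j h
          rw [Finset.insert_comm] at h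
          exact hii (hI.hered _ _ (Finset.subset_insert _ _) h)
        rcases j with _ | j
        · simp [HM, aS_zero hI ω _ hii]
        · simp [HM, aS_zero hI ω _ (h2 _)]
    · intro q hq
      have hadj : ∀ i j, i ∉ S → j ∉ S → i ≠ j → Indep (insert i (insert j S)) → q i = q j := by
        intro i j hi hj hij hind
        refine hq i j ?_
        simp only [HM]
        rw [if_neg (by tauto)]
        refine (aS_pos hI ω hω B hB _ hind (r + 2) ?_ hr).ne'
        rw [Finset.card_insert_of_notMem (by grind), Finset.card_insert_of_notMem hj]; omega
      obtain ⟨y0, -, hy0, hy0i⟩ := hI.exch S B hS hB (by omega)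
      refine ⟨q y0, fun i hi => ?_⟩
      obtain ⟨hiS, hii⟩ := (hMw i).1 hi
      by_cases hiy : i = y0
      · rw [hiy]
      by_cases hind : Indep (insert i (insert y0 S))
      · exact hadj i y0 hiS hy0 hiy hind
      · obtain ⟨v, -, hv, hvi⟩ := hI.exch (insert i S) B hii hB
          (by rw [Finset.card_insert_of_notMem hiS]; omega)
        have hvS : v ∉ S := by grind
        have hvne : v ≠ i := by grind
        have e1 := hadj v i hvS hiS hvne hvi
        obtain ⟨x, hx1, hx2, hx3⟩ := hI.exch (insert y0 S) (insert v (insert i S)) hy0i hvi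
          (by rw [Finset.card_insert_of_notMem hy0, Finset.card_insert_of_notMem hv,
                Finset.card_insert_of_notMem hiS]; omega)
        simp only [Finset.mem_insert] at hx1 hx2
        push Not at hx2
        rcases hx1 with rfl | rfl | hx1
        · rw [← e1]
          exact hadj x y0 hvS hy0 hx2.1 hx3
        · exact absurd hx3 hind
        · exact absurd hx1 hx2.2
    · intro u
      have hA := HM_A' Indep ω r m S u u
      have hB1 : ∀ y, y ∉ S → u ⬝ᵥ HM Indep ω r m (insert y S) *ᵥ extz ω =
          ((r : ℝ) - S.card) * (HM Indep ω r m S *ᵥ u) (some y) := by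
        intro y hy
        exact HM_Bdot Indep ω r m S y hy _
      have hB2 : ∀ y, y ∉ S → extz ω ⬝ᵥ HM Indep ω r m (insert y S) *ᵥ extz ω =
          ((r : ℝ) - S.card) * (HM Indep ω r m S *ᵥ extz ω) (some y) := by
        intro y hy
        exact HM_Bdot Indep ω r m S y hy _
      have hterm : ∀ y ∈ Sᶜ, ω y * (u ⬝ᵥ HM Indep ω r m (insert y S) *ᵥ u) ≤
          ((r : ℝ) - S.card) * (ω y * ((HM Indep ω r m S *ᵥ u) (some y)) ^ 2 /
            (HM Indep ω r m S *ᵥ extz ω) (some y)) := by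
        intro y hy
        have hyS : y ∉ S := Finset.mem_compl.1 hy
        by_cases hi : Indep (insert y S)
        · have hc : (insert y S).card + d = r := by
            rw [Finset.card_insert_of_notMem hyS]; omega
          have h1 := ih _ hi hc u
          have h2 := HM_ww_pos hI ω hω B hB r hr m _ hi (by omega)
          rw [hB1 y hyS, hB2 y hyS] at h1
          rw [hB2 y hyS] at h2
          have h3 : 0 < (HM Indep ω r m S *ᵥ extz ω) (some y) := by
            by_contra hcon
            push Not at hcon
            nlinarith
          have h4 : u ⬝ᵥ HM Indep ω r m (insert y S) *ᵥ u ≤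
              ((r : ℝ) - S.card) * ((HM Indep ω r m S *ᵥ u) (some y)) ^ 2 /
                (HM Indep ω r m S *ᵥ extz ω) (some y) := by
            rw [le_div_iff₀ h3]
            refine le_of_mul_le_mul_left ?_ hdpos
            nlinarith
          calc _ ≤ ω y * _ := mul_le_mul_of_nonneg_left h4 (hω y).le
            _ = _ := by ring
        · rw [HM_zero hI ω r m _ hi]
          have : (HM Indep ω r m S *ᵥ extz ω) (some y) = 0 := by
            by_contra hcon
            exact hi ((hMw y).1 hcon).2
          rw [this]
          simp
      have h5 := Finset.sum_le_sum hterm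
      rw [hA, ← Finset.mul_sum] at h5
      have h6 := le_of_mul_le_mul_left h5 hdpos
      refine h6.trans (le_of_eq ?_)
      refine Finset.sum_subset (Finset.subset_univ _) ?_
      intro y _ hy
      have hyS : y ∈ S := by simpa using hy
      have : (HM Indep ω r m S *ᵥ extz ω) (some y) = 0 := by
        by_contra hcon
        exact ((hMw y).1 hcon).1 hyS
      rw [this, div_zero]

lemma ker_descend {Indep : Finset X → Prop} (hI : MatHyp Indep) (ω : X → ℝ) (hω : ∀ x, 0 < ω x)
    (B : Finset X) (hB : Indep B) (r : ℕ) (hr : r + 2 ≤ B.card) (v : Option X → ℝ)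
    (h0 : ∀ z, z ⬝ᵥ HM Indep ω r ((Fintype.card X : ℝ) - r) ∅ *ᵥ v = 0) (S : Finset X) :
    Indep S → S.card ≤ r → ∀ z, z ⬝ᵥ HM Indep ω r ((Fintype.card X : ℝ) - r) S *ᵥ v = 0 := by
  set m : ℝ := (Fintype.card X : ℝ) - r with hm
  induction S using Finset.induction_on with
  | empty => exact fun _ _ => h0
  | insert a S ha ih =>
    intro hi hc
    rw [Finset.card_insert_of_notMem ha] at hc
    have hS := hI.hered _ _ (Finset.subset_insert a S) hi
    have ih' := ih hS (by omega)
    have hvw : ∀ y, y ∉ S → v ⬝ᵥ HM Indep ω r m (insert y S) *ᵥ extz ω = 0 := by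
      intro y hy
      have e : v ⬝ᵥ HM Indep ω r m (insert y S) *ᵥ extz ω =
          ((r : ℝ) - S.card) * (HM Indep ω r m S *ᵥ v) (some y) := by
        exact HM_Bdot Indep ω r m S y hy _
      have h1 := ih' (Pi.single (some y) 1)
      rw [single_dotProduct, one_mul] at h1
      rw [e, h1, mul_zero]
    have hle : ∀ y ∈ Sᶜ, ω y * (v ⬝ᵥ HM Indep ω r m (insert y S) *ᵥ v) ≤ 0 := by
      intro y hy
      have hyS : y ∉ S := Finset.mem_compl.1 hy
      by_cases hyi : Indep (insert y S)
      · have hcy := Finset.card_insert_of_notMem hyS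
        have h1 := HM_hyp hI ω hω B hB r hr (r - (insert y S).card) _ hyi (by omega) v
        rw [← hm, hvw y hyS] at h1
        have h2 := HM_ww_pos hI ω hω B hB r hr m _ hyi (by omega)
        have h3 : v ⬝ᵥ HM Indep ω r m (insert y S) *ᵥ v ≤ 0 := by
          by_contra hcon
          push Not at hcon
          nlinarith [mul_pos hcon h2]
        exact mul_nonpos_of_nonneg_of_nonpos (hω y).le h3
      · rw [HM_zero hI ω r m _ hyi]; simp
    have hsum := HM_A' Indep ω r m S v v
    rw [ih' v, mul_zero] at hsum
    have h4 := (Finset.sum_eq_zero_iff_of_nonpos hle).1 hsum a (Finset.mem_compl.2 ha)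
    have h5 : v ⬝ᵥ HM Indep ω r m (insert a S) *ᵥ v = 0 := by
      rcases mul_eq_zero.1 h4 with h | h
      · exact absurd h (hω a).ne'
      · exact h
    have hca := Finset.card_insert_of_notMem ha
    exact aux_ker _ (HM_symm Indep ω r m _) (extz ω)
      (HM_ww_pos hI ω hω B hB r hr m _ hi (by omega))
      (HM_hyp hI ω hω B hB r hr (r - (insert a S).card) _ hi (by omega)) v (hvw a ha) h5

/-- kernel vector at the bottom level forces uniformity -/
lemma base_ker {Indep : Finset X → Prop} (hI : MatHyp Indep) (ω : X → ℝ) (hω : ∀ x, 0 < ω x)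
    (r : ℕ) (hr : r + 2 ≤ Fintype.card X) (c : ℝ)
    (S : Finset X) (hS : Indep S) (hSr : S.card = r)
    (h0 : ∀ z, z ⬝ᵥ HM Indep ω r ((Fintype.card X : ℝ) - r) S *ᵥ
      ((Pi.single none 1 : Option X → ℝ) - c • extz ω) = 0) :
    (∀ y, y ∉ S → c * ω y = 1) ∧
      ∀ y z, y ∉ S → z ∉ S → y ≠ z → Indep (insert y (insert z S)) := by
  set m : ℝ := (Fintype.card X : ℝ) - r with hm
  have hm2 : 2 ≤ m := by
    have : ((r + 2 : ℕ) : ℝ) ≤ Fintype.card X := by exact_mod_cast hr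
    push_cast at this
    linarith
  have mc : ∀ a, a ∈ mCont Indep S ↔ a ∉ S ∧ Indep (insert a S) := by
    intro a; simp [mCont]
  simp only [HM_base hI ω r m S hS hSr] at h0
  have hsum : c * ∑ y ∈ mCont Indep S, ω y = m := by
    have h1 := h0 (Pi.single none 1)
    simp [extz, ← Finset.mul_sum] at h1
    have h2 : (m - 1) * (c * ∑ y ∈ mCont Indep S, ω y) = (m - 1) * m := by linarith
    exact mul_left_cancel₀ (by linarith) h2
  have hcl : ∀ y ∈ mCont Indep S, c * ∑ z ∈ mParClass Indep S y, ω z = 1 := by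
    intro y hy
    have h1 := h0 (Pi.single (some y) 1)
    simp [extz, ← Finset.mul_sum, Pi.single_apply, hy, hsum] at h1
    linarith
  have hself : ∀ y ∈ mCont Indep S, y ∈ mParClass Indep S y := by
    intro y hy; simp [mParClass, hy]
  have hc : 0 < c := by
    by_contra hcon
    push Not at hcon
    have : 0 ≤ ∑ y ∈ mCont Indep S, ω y := Finset.sum_nonneg fun y _ => (hω y).le
    nlinarith
  have hle : ∀ y ∈ mCont Indep S, c * ω y ≤ 1 := by
    intro y hy
    rw [← hcl y hy]
    refine mul_le_mul_of_nonneg_left ?_ hc.le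
    exact Finset.single_le_sum (f := ω) (fun z _ => (hω z).le) (hself y hy)
  have hcard := cont_card Indep S
  rw [hSr, ← hm] at hcard
  have hsum' : ∑ y ∈ mCont Indep S, (1 - c * ω y) = (mCont Indep S).card - m := by
    rw [Finset.sum_sub_distrib, ← Finset.mul_sum, hsum]; simp
  have hnn : 0 ≤ ∑ y ∈ mCont Indep S, (1 - c * ω y) :=
    Finset.sum_nonneg fun y hy => by linarith [hle y hy]
  have hceq : ((mCont Indep S).card : ℝ) = m := by linarith
  have hone : ∀ y ∈ mCont Indep S, c * ω y = 1 := by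
    intro y hy
    have h1 : ∑ y ∈ mCont Indep S, (1 - c * ω y) = 0 := by linarith
    have := (Finset.sum_eq_zero_iff_of_nonneg (fun y hy => by linarith [hle y hy])).1 h1 y hy
    linarith
  have hall : mCont Indep S = Sᶜ := by
    refine Finset.eq_of_subset_of_card_le ?_ ?_
    · intro y hy; simpa using ((mc y).1 hy).1
    · have h2 := Finset.card_add_card_compl S
      have h3 : ((S.card + Sᶜ.card : ℕ) : ℝ) = Fintype.card X := by exact_mod_cast h2
      push_cast at h3
      rw [hSr] at h3
      have : (Sᶜ.card : ℝ) ≤ (mCont Indep S).card := by linarith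
      exact_mod_cast this
  have hmem : ∀ y, y ∉ S → y ∈ mCont Indep S := by
    intro y hy; rw [hall]; simpa using hy
  refine ⟨fun y hy => hone y (hmem y hy), ?_⟩
  intro y z hy hz hyz
  by_contra hcon
  have hyz' : y ∈ mParClass Indep S z := by
    simp [mParClass, hmem y hy, hcon]
  have hsub : ({y, z} : Finset X) ⊆ mParClass Indep S z := by
    intro a ha
    simp only [Finset.mem_insert, Finset.mem_singleton] at ha
    rcases ha with rfl | rfl
    · exact hyz'
    · exact hself _ (hmem _ hz)
  have h1 := Finset.sum_le_sum_of_subset_of_nonneg hsub (f := ω) (fun a _ _ => (hω a).le)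
  rw [Finset.sum_pair hyz] at h1
  have h2 := hcl z (hmem z hz)
  have h3 := hone z (hmem z hz)
  have h4 := hω y
  nlinarith

lemma wNum_eq (Indep : Finset X → Prop) (ω : X → ℝ) (j : ℕ) :
    wNumIndep Indep ω j = aS Indep ω ∅ j := by
  simp [wNumIndep, aS]

lemma forward {Indep : Finset X → Prop} (hI : MatHyp Indep) (ω : X → ℝ) (hω : ∀ x, 0 < ω x)
    (B : Finset X) (hB : Indep B) (r : ℕ) (hr : r + 2 ≤ B.card)
    (heq : ((r : ℝ) + 1) * ((Fintype.card X : ℝ) - r - 1) * (wNumIndep Indep ω (r + 1)) ^ 2 =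
      ((r : ℝ) + 2) * ((Fintype.card X : ℝ) - r) * wNumIndep Indep ω r *
        wNumIndep Indep ω (r + 2)) :
    (∀ S : Finset X, S.card = r + 2 → Indep S) ∧ (∀ x y : X, ω x = ω y) := by
  have hempty : Indep ∅ := hI.hered _ _ (Finset.empty_subset _) hB
  set m : ℝ := (Fintype.card X : ℝ) - r with hm
  have hrX : r + 2 ≤ Fintype.card X := hr.trans (Finset.card_le_univ B)
  set M := HM Indep ω r m ∅ with hM
  have hsym : M.IsSymm := HM_symm _ _ _ _ _
  set w := extz ω with hw
  set e0 : Option X → ℝ := Pi.single none 1 with he0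
  simp only [wNum_eq] at heq
  have hww := HM_ww_pos hI ω hω B hB r hr m ∅ hempty (by simp)
  have h00 : e0 ⬝ᵥ M *ᵥ e0 = m * (m - 1) * aS Indep ω ∅ r := by
    rw [he0, single_dotProduct, Matrix.mulVec_single_one]; simp [hM, HM]
  have h0w : e0 ⬝ᵥ M *ᵥ w = (m - 1) * ((r + 1) * aS Indep ω ∅ (r + 1)) := by
    have := aS_dc Indep ω ∅ (r + 1)
    push_cast at this
    rw [Finset.card_empty, Nat.cast_zero, sub_zero] at this
    rw [← this, he0, single_dotProduct, one_mul, Finset.mul_sum]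
    simp only [mulVec, dotProduct, Fintype.sum_option, hw, extz, hM, HM, Option.elim, mul_zero,
      zero_add]
    exact Finset.sum_congr rfl fun _ _ => by ring
  have hwweq : w ⬝ᵥ M *ᵥ w = (r + 1) * ((r + 2) * aS Indep ω ∅ (r + 2)) := by
    have := aS_dc Indep ω ∅ (r + 2)
    push_cast at this
    rw [Finset.card_empty, Nat.cast_zero, sub_zero] at this
    rw [← this, dotProduct, Fintype.sum_option]
    simp only [hM, hw, HM_B']
    simp only [extz, Option.elim, zero_mul, zero_add, Finset.mul_sum]
    exact Finset.sum_congr rfl fun _ _ => by simp; ring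
  set c : ℝ := (e0 ⬝ᵥ M *ᵥ w) / (w ⬝ᵥ M *ᵥ w) with hc
  have hww' : 0 < w ⬝ᵥ M *ᵥ w := hww
  have hcw : c * (w ⬝ᵥ M *ᵥ w) = e0 ⬝ᵥ M *ᵥ w := by rw [hc]; field_simp
  have hE : (e0 ⬝ᵥ M *ᵥ w) ^ 2 = (e0 ⬝ᵥ M *ᵥ e0) * (w ⬝ᵥ M *ᵥ w) := by
    rw [h00, h0w, hwweq]
    linear_combination (m - 1) * (r + 1) * heq
  set v := e0 - c • w with hv
  have hvw : v ⬝ᵥ M *ᵥ w = 0 := by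
    simp only [hv, sub_dotProduct, smul_dotProduct, smul_eq_mul]; linarith
  have hvv : v ⬝ᵥ M *ᵥ v = 0 := by
    have h1 : v ⬝ᵥ M *ᵥ v = v ⬝ᵥ M *ᵥ e0 - c * (v ⬝ᵥ M *ᵥ w) := by
      conv_lhs => rw [hv, mulVec_sub, mulVec_smul, dotProduct_sub, dotProduct_smul, ← hv]
      rfl
    rw [h1, hvw, hv, sub_dotProduct, smul_dotProduct, aux_symm_dot M hsym w e0, smul_eq_mul,
      mul_zero, sub_zero]
    have h2 : (e0 ⬝ᵥ M *ᵥ e0 - c * (e0 ⬝ᵥ M *ᵥ w)) * (w ⬝ᵥ M *ᵥ w) = 0 := by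
      linear_combination -hE - (e0 ⬝ᵥ M *ᵥ w) * hcw
    exact (mul_eq_zero.1 h2).resolve_right hww'.ne'
  have hker := aux_ker M hsym w hww' (HM_hyp hI ω hω B hB r hr r ∅ hempty (by simp)) v hvw hvv
  have hdesc := ker_descend hI ω hω B hB r hr v hker
  have hbase : ∀ S, Indep S → S.card = r → _ := fun S hS hSr =>
    base_ker hI ω hω r hrX c S hS hSr (hdesc S hS hSr.le)
  constructor
  · -- grow an independent subset of `S`
    intro S hSc
    have grow : ∀ j, j ≤ r → ∃ R ⊆ S, Indep R ∧ R.card = j := by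
      intro j
      induction j with
      | zero => exact fun _ => ⟨∅, Finset.empty_subset _, hempty, rfl⟩
      | succ j ih =>
        intro hj
        obtain ⟨R, hRS, hRi, hRc⟩ := ih (by omega)
        obtain ⟨U, hU1, hU2, hU3⟩ := mat_extend hI B hB (r - j) R hRi (by omega)
        have hUr : U.card = r := by omega
        have hlt : (1 : ℕ) < (S \ U).card := by
          have := Finset.le_card_sdiff U S
          omega
        obtain ⟨y, hy, z, hz, hyz⟩ := Finset.one_lt_card.1 hlt
        rw [Finset.mem_sdiff] at hy hz
        have h1 := (hbase U hU1 hUr).2 y z hy.2 hz.2 hyz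
        refine ⟨insert y R, ?_, ?_, ?_⟩
        · exact Finset.insert_subset hy.1 hRS
        · exact hI.hered _ _ (Finset.insert_subset_insert _
            (hU2.trans (Finset.subset_insert _ _))) h1
        · rw [Finset.card_insert_of_notMem (fun h => hy.2 (hU2 h)), hRc]
    obtain ⟨R, hRS, hRi, hRc⟩ := grow r le_rfl
    have h2 : (S \ R).card = 2 := by
      rw [Finset.card_sdiff_of_subset hRS]; omega
    obtain ⟨y, z, hyz, hSR⟩ := Finset.card_eq_two.1 h2
    have hy : y ∈ S \ R := by rw [hSR]; simp
    have hz : z ∈ S \ R := by rw [hSR]; simp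
    rw [Finset.mem_sdiff] at hy hz
    have h1 := (hbase R hRi hRc).2 y z hy.2 hz.2 hyz
    have : S = insert y (insert z R) := by
      rw [← Finset.sdiff_union_of_subset hRS, hSR]
      ext a; simp [or_assoc]
    rw [this]; exact h1
  · have hone : ∀ x, c * ω x = 1 := by
      intro x
      have h1 : r ≤ (B.erase x).card := by
        have := Finset.pred_card_le_card_erase (s := B) (a := x)
        omega
      obtain ⟨R, hR1, hR2⟩ := Finset.exists_subset_card_eq h1
      have hRi : Indep R := hI.hered _ _ (hR1.trans (Finset.erase_subset _ _)) hB
      refine (hbase R hRi hR2).1 x fun h => ?_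
      exact (Finset.notMem_erase x B) (hR1 h)
    intro x y
    have hc0 : c ≠ 0 := by
      intro h
      have := hone x
      rw [h] at this; simp at this
    exact mul_left_cancel₀ hc0 ((hone x).trans (hone y).symm)

lemma uniform_count (Indep : Finset X → Prop) (ω : X → ℝ) (a : ℝ) (ha : ∀ x, ω x = a) (j : ℕ)
    (h : ∀ S : Finset X, S.card = j → Indep S) :
    wNumIndep Indep ω j = (Fintype.card X).choose j * a ^ j := by
  unfold wNumIndep
  have e : Finset.univ.filter (fun S : Finset X => Indep S ∧ S.card = j) =
      Finset.powersetCard j Finset.univ := by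
    ext S
    simp only [Finset.mem_filter, Finset.mem_univ, true_and, Finset.mem_powersetCard,
      Finset.subset_univ]
    exact ⟨fun h => h.2, fun h' => ⟨h S h', h'⟩⟩
  rw [e]
  rw [Finset.sum_congr rfl (g := fun _ => a ^ j)]
  · simp [Finset.card_powersetCard]
  · intro S hS
    rw [Finset.prod_congr rfl (fun x _ => ha x), Finset.prod_const, (Finset.mem_powersetCard.1 hS).2]

lemma backward {Indep : Finset X → Prop} (hI : MatHyp Indep) (ω : X → ℝ) (r : ℕ)
    (hr : r + 2 ≤ Fintype.card X)
    (h1 : ∀ S : Finset X, S.card = r + 2 → Indep S) (h2 : ∀ x y : X, ω x = ω y) :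
    ((r : ℝ) + 1) * ((Fintype.card X : ℝ) - r - 1) * (wNumIndep Indep ω (r + 1)) ^ 2 =
      ((r : ℝ) + 2) * ((Fintype.card X : ℝ) - r) * wNumIndep Indep ω r *
        wNumIndep Indep ω (r + 2) := by
  have hall : ∀ S : Finset X, S.card ≤ r + 2 → Indep S := by
    intro S hS
    obtain ⟨T, hT1, hT2⟩ := Finset.exists_superset_card_eq hS hr
    exact hI.hered _ _ hT1 (h1 T hT2)
  have hne : Nonempty X := Fintype.card_pos_iff.1 (by omega)
  obtain ⟨x0⟩ := hne
  have ha : ∀ x, ω x = ω x0 := fun x => h2 x x0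
  rw [uniform_count Indep ω _ ha r (fun S hS => hall S (by omega)),
    uniform_count Indep ω _ ha (r + 1) (fun S hS => hall S (by omega)),
    uniform_count Indep ω _ ha (r + 2) (fun S hS => hall S (by omega))]
  have c1 := Nat.choose_succ_right_eq (Fintype.card X) r
  have c2 := Nat.choose_succ_right_eq (Fintype.card X) (r + 1)
  generalize Fintype.card X = n at *
  have c1' : (n.choose (r + 1) : ℝ) * (r + 1) = n.choose r * ((n : ℝ) - r) := by
    have : ((n.choose (r + 1) * (r + 1) : ℕ) : ℝ) = (n.choose r * (n - r) : ℕ) := by rw [c1]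
    rw [Nat.cast_mul, Nat.cast_mul, Nat.cast_sub (by omega)] at this
    push_cast at this; exact this
  have c2' : (n.choose (r + 2) : ℝ) * (r + 2) = n.choose (r + 1) * ((n : ℝ) - r - 1) := by
    have : ((n.choose (r + 1 + 1) * (r + 1 + 1) : ℕ) : ℝ) =
      (n.choose (r + 1) * (n - (r + 1)) : ℕ) := by rw [c2]
    rw [Nat.cast_mul, Nat.cast_mul, Nat.cast_sub (by omega)] at this
    push_cast at this
    rw [show r + 2 = r + 1 + 1 from rfl]
    linear_combination this
  generalize (n.choose r : ℝ) = A at *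
  generalize (n.choose (r + 1) : ℝ) = B at *
  generalize (n.choose (r + 2) : ℝ) = D at *
  generalize ω x0 = a
  have e : a ^ r * a ^ (r + 2) = (a ^ (r + 1)) ^ 2 := by ring
  calc _ = (B * (r + 1)) * (B * ((n : ℝ) - r - 1)) * (a ^ (r + 1)) ^ 2 := by ring
    _ = (A * ((n : ℝ) - r)) * (D * (r + 2)) * (a ^ r * a ^ (r + 2)) := by rw [c1', c2', e]
    _ = _ := by ring

/-- **Weighted equality conditions for log-concavity of matroids.** Equality holds in the
weighted ultra-log-concavity inequality if and only if every `(k+1)`-subset of the ground set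
is independent (i.e. `girth(M) > k+1`) and the weight function is uniform. -/
theorem matroid_weighted_equality
    (Indep : Finset X → Prop)
    (h_ne : ∃ S : Finset X, Indep S)
    (h_hered : ∀ S T : Finset X, S ⊆ T → Indep T → Indep S)
    (h_exch : ∀ S T : Finset X, Indep S → Indep T → S.card < T.card →
      ∃ x ∈ T, x ∉ S ∧ Indep (insert x S))
    (ω : X → ℝ) (hω : ∀ x, 0 < ω x)
    (k : ℕ) (hk1 : 1 ≤ k) (hk2 : k < matroidRk Indep) :
    (wNumIndep Indep ω k) ^ 2 =
        ((1 : ℝ) + 1 / (k : ℝ)) * (1 + 1 / ((Fintype.card X : ℝ) - (k : ℝ))) *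
          wNumIndep Indep ω (k - 1) * wNumIndep Indep ω (k + 1) ↔
      (∀ S : Finset X, S.card = k + 1 → Indep S) ∧ (∀ x y : X, ω x = ω y) := by
  have hI : MatHyp Indep := ⟨h_hered, h_exch⟩
  obtain ⟨r, rfl⟩ : ∃ r, k = r + 1 := ⟨k - 1, by omega⟩
  obtain ⟨B, hB, hBc⟩ : ∃ B, Indep B ∧ r + 2 ≤ B.card := by
    unfold matroidRk at hk2
    obtain ⟨B, -, hB⟩ := Finset.lt_sup_iff.1 hk2
    by_cases hi : Indep B
    · rw [if_pos hi] at hB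
      exact ⟨B, hi, hB⟩
    · rw [if_neg hi] at hB
      omega
  have hrX : r + 2 ≤ Fintype.card X := hBc.trans (Finset.card_le_univ B)
  have hn : (0 : ℝ) < (Fintype.card X : ℝ) - r - 1 := by
    have : ((r + 2 : ℕ) : ℝ) ≤ Fintype.card X := by exact_mod_cast hrX
    push_cast at this
    linarith
  have hr0 : (0 : ℝ) < (r : ℝ) + 1 := by positivity
  have key : (wNumIndep Indep ω (r + 1)) ^ 2 =
        ((1 : ℝ) + 1 / ((r + 1 : ℕ) : ℝ)) *
          (1 + 1 / ((Fintype.card X : ℝ) - ((r + 1 : ℕ) : ℝ))) *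
          wNumIndep Indep ω (r + 1 - 1) * wNumIndep Indep ω (r + 1 + 1) ↔
      ((r : ℝ) + 1) * ((Fintype.card X : ℝ) - r - 1) * (wNumIndep Indep ω (r + 1)) ^ 2 =
      ((r : ℝ) + 2) * ((Fintype.card X : ℝ) - r) * wNumIndep Indep ω r *
        wNumIndep Indep ω (r + 2) := by
    rw [show r + 1 - 1 = r from rfl, show r + 1 + 1 = r + 2 from rfl]
    push_cast
    rw [show (Fintype.card X : ℝ) - ((r : ℝ) + 1) = (Fintype.card X : ℝ) - r - 1 by ring]
    generalize wNumIndep Indep ω r = a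
    generalize wNumIndep Indep ω (r + 1) = b
    generalize wNumIndep Indep ω (r + 2) = c
    set p : ℝ := (r : ℝ) + 1 with hp
    set q : ℝ := (Fintype.card X : ℝ) - r - 1 with hq
    have e1 : (r : ℝ) + 2 = p + 1 := by rw [hp]; ring
    have e2 : (Fintype.card X : ℝ) - r = q + 1 := by rw [hq]; ring
    rw [e1, e2]
    have e3 : (1 + 1 / p) * (1 + 1 / q) * a * c = ((p + 1) * (q + 1) * a * c) / (p * q) := by
      field_simp
    rw [e3, eq_div_iff (mul_pos hr0 hn).ne', mul_comm (b ^ 2)]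
  rw [key]
  exact ⟨forward hI ω hω B hB r hBc, fun h => backward hI ω r hrX h.1 h.2⟩
end
end

section
/- Let M = (X, I) be a matroid, let k be an integer with 1 ≤ k < rk(M), and let ω : X → ℝ_{>0} be a weight function. Then I_ω(k)² = (1 + 1/k)·(1 + 1/(p(k−1) − 1))·I_ω(k−1)·I_ω(k+1) if and only if there exists s > 0 such that every independent set S ∈ I with |S| = k−1 satisfies: (ME1) |Par(S)| = p(k−1), and (ME2) Σ_{x ∈ C} ω(x) = s for every parallel class C ∈ Par(S). -/
open scoped Classical BigOperators

noncomputable section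

variable {X : Type*} [Fintype X] [DecidableEq X]

lemma spec_real {ι : Type*} [Fintype ι] (l β u : ι → ℝ) (h y : ℝ)
    (hm : ∀ c : ι → ℝ, ∑ i, (l i * c i ^ 2 + 2 * y * β i * c i) + h * y ^ 2
      ≤ ∑ i, (l i * c i + y * β i) ^ 2)
    (hc : ∀ i, l i ≤ 0 ∨ (l i = 1 ∧ u i + y * β i = 0)) :
    ∑ i, (l i * u i ^ 2 + 2 * y * β i * u i) + h * y ^ 2 ≤ 0 := by
  set B : ℝ := ∑ i, (if l i = 0 then (y * β i) ^ 2 else 0) with hB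
  set C : ℝ := ∑ i, (if l i = 0 then 0 else - (y * β i) ^ 2 / l i) with hC
  have key : ∀ t : ℝ, C + 2 * t * B + h * y ^ 2 ≤ B := by
    intro t
    have := hm (fun i => if l i = 0 then t * y * β i else - (y * β i) / l i)
    have e1 : ∑ i, (l i * (if l i = 0 then t * y * β i else - (y * β i) / l i) ^ 2 + 2 * y * β i * (if l i = 0 then t * y * β i else - (y * β i) / l i)) = C + 2 * t * B := by
      rw [hB, hC, Finset.mul_sum, ← Finset.sum_add_distrib]
      refine Finset.sum_congr rfl fun i _ => ?_
      by_cases hi : l i = 0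
      · simp [hi]; ring
      · simp only [hi, if_false]; field_simp; ring
    have e2 : ∑ i, (l i * (if l i = 0 then t * y * β i else - (y * β i) / l i) + y * β i) ^ 2 = B := by
      rw [hB]
      refine Finset.sum_congr rfl fun i _ => ?_
      by_cases hi : l i = 0
      · simp [hi]
      · simp only [hi, if_false]; field_simp; ring
    linarith
  have hB0 : 0 ≤ B := Finset.sum_nonneg fun i _ => by split_ifs <;> positivity
  have hBz : B = 0 := by
    by_contra hne
    have hpos : 0 < B := lt_of_le_of_ne hB0 (Ne.symm hne)
    have := key ((B - C - h * y ^ 2 + 1) / (2 * B))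
    have e : 2 * ((B - C - h * y ^ 2 + 1) / (2 * B)) * B = B - C - h * y ^ 2 + 1 := by
      field_simp
    linarith
  have hz : ∀ i, l i = 0 → y * β i = 0 := by
    intro i hi
    have := (Finset.sum_eq_zero_iff_of_nonneg (s := Finset.univ) (f := fun i => (if l i = 0 then (y * β i) ^ 2 else 0)) (fun i _ => by split_ifs <;> positivity)).1 hBz i (Finset.mem_univ _)
    simpa [hi] using this
  have h0 := key 0
  have : ∑ i, (l i * u i ^ 2 + 2 * y * β i * u i) ≤ C := by
    rw [hC]
    refine Finset.sum_le_sum fun i _ => ?_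
    by_cases hi : l i = 0
    · have := hz i hi
      simp only [hi, if_true]
      have e : 0 * u i ^ 2 + 2 * y * β i * u i = 2 * (y * β i) * u i := by ring
      rw [e, this]; simp
    · simp only [hi, if_false]
      rcases hc i with hneg | ⟨h1, h2⟩
      · have hlt : l i < 0 := lt_of_le_of_ne hneg hi
        rw [le_div_iff_of_neg hlt]
        nlinarith [sq_nonneg (l i * u i + y * β i)]
      · rw [h1]
        have : u i = - (y * β i) := by linarith
        rw [this]; nlinarith
  linarith

open scoped InnerProductSpace in
lemma spec_abs {E : Type*} [NormedAddCommGroup E] [InnerProductSpace ℝ E] [FiniteDimensional ℝ E]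
    (T : E →ₗ[ℝ] E) (hT : T.IsSymmetric) (w b : E) (h : ℝ)
    (hle : ∀ u, ⟪u, T u⟫_ℝ ≤ ⟪u, u⟫_ℝ)
    (heq : ∀ u, ⟪u, T u⟫_ℝ = ⟪u, u⟫_ℝ → ∃ r : ℝ, u = r • w)
    (hm : ∀ u (y : ℝ), ⟪u, T u⟫_ℝ + 2 * y * ⟪b, u⟫_ℝ + h * y ^ 2 ≤ ‖T u + y • b‖ ^ 2)
    (u : E) (y : ℝ) (hu : ⟪w, u⟫_ℝ + y * ⟪b, w⟫_ℝ = 0) :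
    ⟪u, T u⟫_ℝ + 2 * y * ⟪b, u⟫_ℝ + h * y ^ 2 ≤ 0 := by
  set e := hT.eigenvectorBasis rfl with he
  set l := hT.eigenvalues rfl with hl
  have hTe : ∀ i, T (e i) = l i • e i := fun i => hT.apply_eigenvectorBasis rfl i
  have hTc : ∀ (u : E) i, ⟪e i, T u⟫_ℝ = l i * ⟪e i, u⟫_ℝ := by
    intro u i
    rw [← hT, hTe, inner_smul_left]; simp
  have hee : ∀ i, ⟪e i, e i⟫_ℝ = 1 := fun i => by
    rw [real_inner_self_eq_norm_sq, e.orthonormal.1 i]; norm_num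
  have form : ∀ (u : E) (y : ℝ), ⟪u, T u⟫_ℝ + 2 * y * ⟪b, u⟫_ℝ = ∑ i, (l i * ⟪e i, u⟫_ℝ ^ 2 + 2 * y * ⟪e i, b⟫_ℝ * ⟪e i, u⟫_ℝ) := by
    intro u y
    rw [← e.sum_inner_mul_inner u (T u), ← e.sum_inner_mul_inner b u, Finset.mul_sum, ← Finset.sum_add_distrib]
    refine Finset.sum_congr rfl fun i _ => ?_
    rw [hTc, real_inner_comm (e i) u, real_inner_comm (e i) b]; ring
  have nrm : ∀ (u : E) (y : ℝ), ‖T u + y • b‖ ^ 2 = ∑ i, (l i * ⟪e i, u⟫_ℝ + y * ⟪e i, b⟫_ℝ) ^ 2 := by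
    intro u y
    rw [← real_inner_self_eq_norm_sq, ← e.sum_inner_mul_inner]
    refine Finset.sum_congr rfl fun i _ => ?_
    rw [real_inner_comm (e i) (T u + y • b), inner_add_right, inner_smul_right, hTc]; ring
  rw [form]
  apply spec_real
  · intro c
    have := hm (∑ i, c i • e i) y
    rw [form, nrm] at this
    have hci : ∀ i, ⟪e i, ∑ j, c j • e j⟫_ℝ = c i := fun i => by
      simpa using e.orthonormal.inner_right_fintype c i
    simpa only [hci] using this
  · intro i
    have h1 : l i ≤ 1 := by
      have := hle (e i); rw [hTc, hee] at this; linarith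
    have h2 : l i ≤ l i ^ 2 := by
      have := hm (e i) 0
      rw [hTc, hTe, hee] at this
      simp [norm_smul, e.orthonormal.1 i] at this
      simpa using this
    by_cases hi : l i ≤ 0
    · exact Or.inl hi
    · right
      have h3 : l i = 1 := by nlinarith
      refine ⟨h3, ?_⟩
      obtain ⟨r, hr⟩ := heq (e i) (by rw [hTc, hee, h3]; norm_num)
      rw [hr, inner_smul_left, inner_smul_left, real_inner_comm b w]
      simp
      linear_combination r * hu

lemma spec_mat {X : Type*} [Fintype X] (H : X → X → ℝ) (ω b g : X → ℝ) (h : ℝ)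
    (hω : ∀ x, 0 < ω x) (hsym : ∀ x y, H x y = H y x) (hnn : ∀ x y, 0 ≤ H x y)
    (hg : ∀ x, g x = ∑ y, H x y * ω y)
    (hb : ∀ x, g x = 0 → b x = 0)
    (hconn : ∀ x y, g x ≠ 0 → g y ≠ 0 → 0 < H x y ∨ ∃ z, 0 < H x z ∧ 0 < H y z)
    (hm : ∀ (v : X → ℝ) (y : ℝ), ∑ x, ∑ x', H x x' * v x * v x' + 2 * y * ∑ x, b x * v x + h * y ^ 2
      ≤ ∑ x, ω x / g x * (∑ x', H x x' * v x' + b x * y) ^ 2)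
    (v : X → ℝ) (y : ℝ) (hv : ∑ x, g x * v x + y * ∑ x, b x * ω x = 0) :
    ∑ x, ∑ x', H x x' * v x * v x' + 2 * y * ∑ x, b x * v x + h * y ^ 2 ≤ 0 := by
  have hg0 : ∀ x, 0 ≤ g x := fun x => by
    rw [hg]; exact Finset.sum_nonneg fun y _ => mul_nonneg (hnn _ _) (hω y).le
  set R : X → ℝ := fun x => √(g x / ω x) with hR
  have hR2 : ∀ x, R x ^ 2 = g x / ω x := fun x => Real.sq_sqrt (div_nonneg (hg0 x) (hω x).le)
  have hR0 : ∀ x, R x = 0 → g x = 0 := fun x hx => by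
    have := hR2 x
    rw [hx] at this
    have h2 := hω x
    field_simp at this
    linarith
  have hgR : ∀ x, g x = 0 → R x = 0 := fun x hx => by simp [hR, hx]
  have hH0 : ∀ x, g x = 0 → ∀ y, H x y = 0 := by
    intro x hx y
    rw [hg, Finset.sum_eq_zero_iff_of_nonneg (fun y _ => mul_nonneg (hnn _ _) (hω y).le)] at hx
    have := hx y (Finset.mem_univ _)
    rcases mul_eq_zero.1 this with h | h
    · exact h
    · exact absurd h (hω y).ne'
  set K : Matrix X X ℝ := Matrix.of fun x y => H x y / (R x * R y) with hK
  have hKH : ∀ x y, K x y * R x * R y = H x y := by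
    intro x y
    by_cases h1 : R x = 0
    · rw [hH0 x (hR0 x h1)]; simp [h1]
    by_cases h2 : R y = 0
    · rw [hsym, hH0 y (hR0 y h2)]; simp [h2]
    simp only [hK, Matrix.of_apply]; field_simp
  set T := Matrix.toEuclideanLin K with hTdef
  have hTa : ∀ u x, T u x = ∑ y, K x y * u y := by
    intro u x
    simp [hTdef, Matrix.toEuclideanLin, Matrix.mulVec, dotProduct]
  have hin : ∀ u u' : EuclideanSpace ℝ X, inner ℝ u u' = ∑ x, u x * u' x := by
    intro u u'
    simp [PiLp.inner_apply, mul_comm]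
  have hT : T.IsSymmetric := by
    intro u u'
    simp only [hin, hTa, Finset.sum_mul, Finset.mul_sum]
    rw [Finset.sum_comm]
    refine Finset.sum_congr rfl fun x _ => Finset.sum_congr rfl fun y _ => ?_
    have : K x y = K y x := by simp [hK, hsym x y, mul_comm]
    rw [this]; ring
  have hform : ∀ u : EuclideanSpace ℝ X, inner ℝ u (T u) = ∑ x, ∑ x', H x x' * (u x / R x) * (u x' / R x') := by
    intro u
    simp only [hin, hTa, Finset.mul_sum]
    refine Finset.sum_congr rfl fun x _ => Finset.sum_congr rfl fun y _ => ?_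
    simp only [hK, Matrix.of_apply]
    ring
  -- Laplacian identity
  have hlap : ∀ u : EuclideanSpace ℝ X, inner ℝ u u - inner ℝ u (T u) =
      ∑ x, (if g x = 0 then u x ^ 2 else 0) + 1 / 2 * ∑ x, ∑ y, H x y * ω x * ω y * (u x / R x / ω x - u y / R y / ω y) ^ 2 := by
    intro u
    rw [hform, hin]
    have e1 : ∑ x, u x * u x = ∑ x, (if g x = 0 then u x ^ 2 else 0) + ∑ x, ∑ y, H x y * ω y / ω x * (u x / R x) ^ 2 := by
      rw [← Finset.sum_add_distrib]
      refine Finset.sum_congr rfl fun x _ => ?_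
      rw [← Finset.sum_mul, ← Finset.sum_div, ← hg, div_pow, hR2]
      have := (hω x).ne'
      by_cases hx : g x = 0
      · simp [hx]; ring
      · simp only [hx, if_false]; field_simp; ring
    have e2 : ∑ x, ∑ y, H x y * ω y / ω x * (u x / R x) ^ 2 = ∑ x, ∑ y, H x y * ω x / ω y * (u y / R y) ^ 2 := by
      rw [Finset.sum_comm]
      refine Finset.sum_congr rfl fun x _ => Finset.sum_congr rfl fun y _ => ?_
      rw [hsym]
    have e3 : ∑ x, ∑ y, H x y * ω x * ω y * (u x / R x / ω x - u y / R y / ω y) ^ 2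
        = ∑ x, ∑ y, H x y * ω y / ω x * (u x / R x) ^ 2 + ∑ x, ∑ y, H x y * ω x / ω y * (u y / R y) ^ 2
          - 2 * ∑ x, ∑ x', H x x' * (u x / R x) * (u x' / R x') := by
      simp only [Finset.mul_sum, ← Finset.sum_add_distrib, ← Finset.sum_sub_distrib]
      refine Finset.sum_congr rfl fun x _ => Finset.sum_congr rfl fun y _ => ?_
      have h1 := (hω x).ne'
      have h2 := (hω y).ne'
      generalize u x / R x = a
      generalize u y / R y = c
      field_simp
      ring
    rw [e3, e1, ← e2]; ring
  have hp1 : ∀ u : EuclideanSpace ℝ X, 0 ≤ ∑ x, (if g x = 0 then u x ^ 2 else 0) := fun u =>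
    Finset.sum_nonneg fun x _ => by split_ifs <;> positivity
  have hp2' : ∀ (u : EuclideanSpace ℝ X) x y, 0 ≤ H x y * ω x * ω y * (u x / R x / ω x - u y / R y / ω y) ^ 2 := fun u x y =>
    mul_nonneg (mul_nonneg (mul_nonneg (hnn _ _) (hω _).le) (hω _).le) (sq_nonneg _)
  have hp2 : ∀ u : EuclideanSpace ℝ X, 0 ≤ ∑ x, ∑ y, H x y * ω x * ω y * (u x / R x / ω x - u y / R y / ω y) ^ 2 := fun u =>
    Finset.sum_nonneg fun x _ => Finset.sum_nonneg fun y _ => hp2' u x y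
  let w : EuclideanSpace ℝ X := WithLp.toLp 2 fun x => R x * ω x
  let b' : EuclideanSpace ℝ X := WithLp.toLp 2 fun x => b x / R x
  let u : EuclideanSpace ℝ X := WithLp.toLp 2 fun x => R x * v x
  have hbR : ∀ x (a : ℝ), b x / R x * (R x * a) = b x * a := by
    intro x a
    by_cases h1 : R x = 0
    · rw [hb x (hR0 x h1)]; simp
    · field_simp
  have main := spec_abs T hT w b' h ?_ ?_ ?_ u y ?_
  · have e1 : inner ℝ u (T u) = ∑ x, ∑ x', H x x' * v x * v x' := by
      simp only [hin, hTa, Finset.mul_sum]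
      refine Finset.sum_congr rfl fun x _ => Finset.sum_congr rfl fun y _ => ?_
      rw [← hKH]; simp only [u]; ring
    have e2 : inner ℝ b' u = ∑ x, b x * v x := by
      rw [hin]
      exact Finset.sum_congr rfl fun x _ => hbR x _
    rw [e1, e2] at main
    exact main
  · intro u
    have := hlap u; have := hp1 u; have := hp2 u
    linarith
  · intro u hu
    have h1 := hlap u; have h2 := hp1 u; have h3 := hp2 u
    have h4 : ∑ x, (if g x = 0 then u x ^ 2 else 0) = 0 := by linarith
    have h5 : ∑ x, ∑ y, H x y * ω x * ω y * (u x / R x / ω x - u y / R y / ω y) ^ 2 = 0 := by linarith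
    have h6 : ∀ x, g x = 0 → u x = 0 := by
      intro x hx
      rw [Finset.sum_eq_zero_iff_of_nonneg (fun x _ => by split_ifs <;> positivity)] at h4
      simpa [hx] using h4 x (Finset.mem_univ _)
    have h7 : ∀ x y, 0 < H x y → u x / R x / ω x = u y / R y / ω y := by
      intro x y hxy
      rw [Finset.sum_eq_zero_iff_of_nonneg (fun x _ => Finset.sum_nonneg fun y _ => hp2' u x y)] at h5
      have := h5 x (Finset.mem_univ _)
      rw [Finset.sum_eq_zero_iff_of_nonneg (fun y _ => hp2' u x y)] at this
      have := this y (Finset.mem_univ _)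
      have h8 := (mul_pos (mul_pos hxy (hω x)) (hω y)).ne'
      rcases mul_eq_zero.1 this with h | h
      · exact absurd h h8
      · exact sub_eq_zero.1 (pow_eq_zero_iff (two_ne_zero) |>.1 h)
    have h9 : ∀ x y, g x ≠ 0 → g y ≠ 0 → u x / R x / ω x = u y / R y / ω y := by
      intro x y hx hy
      rcases hconn x y hx hy with h | ⟨z, hz1, hz2⟩
      · exact h7 _ _ h
      · exact (h7 _ _ hz1).trans (h7 _ _ hz2).symm
    by_cases hall : ∃ x0, g x0 ≠ 0
    · obtain ⟨x0, hx0⟩ := hall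
      refine ⟨u x0 / R x0 / ω x0, ?_⟩
      ext x
      simp only [w, PiLp.smul_apply, smul_eq_mul]
      by_cases hx : g x = 0
      · rw [h6 x hx, hgR x hx]; simp
      · rw [h9 x0 x hx0 hx]
        have hRx : R x ≠ 0 := fun h => hx (hR0 x h)
        have := (hω x).ne'
        field_simp
    · push Not at hall
      refine ⟨0, ?_⟩
      ext x
      simp [h6 x (hall x)]
  · intro u y
    have := hm (fun x => u x / R x) y
    rw [hform]
    have e2 : inner ℝ b' u = ∑ x, b x * (u x / R x) := by
      rw [hin]
      refine Finset.sum_congr rfl fun x _ => ?_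
      simp only [b']; ring
    have e3 : ‖T u + y • b'‖ ^ 2 = ∑ x, ω x / g x * (∑ x', H x x' * (u x' / R x') + b x * y) ^ 2 := by
      rw [← real_inner_self_eq_norm_sq, hin]
      refine Finset.sum_congr rfl fun x _ => ?_
      have e4 : (T u + y • b') x = 1 / R x * (∑ x', H x x' * (u x' / R x') + b x * y) := by
        rw [PiLp.add_apply, hTa, mul_add, Finset.mul_sum]
        congr 1
        · refine Finset.sum_congr rfl fun z _ => ?_
          simp only [hK, Matrix.of_apply]
          ring
        · simp [b']; ring
      rw [e4]
      have e5 : ω x / g x = 1 / R x * (1 / R x) := by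
        rw [div_mul_div_comm, ← pow_two (R x), hR2]; simp
      rw [e5]; ring
    rw [e2, e3]
    exact this
  · have e1 : inner ℝ w u = ∑ x, g x * v x := by
      rw [hin]
      refine Finset.sum_congr rfl fun x _ => ?_
      have : g x = R x ^ 2 * ω x := by rw [hR2]; have := (hω x).ne'; field_simp
      rw [this]; simp only [w, u]; ring
    have e2 : inner ℝ b' w = ∑ x, b x * ω x := by
      rw [hin]
      exact Finset.sum_congr rfl fun x _ => hbR x _
    rw [e1, e2]; exact hv

/-! ### Discrete derivatives and ordered weighted counts -/

/-- Discrete derivative of a set function. -/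
def mD (x : X) (G : Finset X → ℝ) (S : Finset X) : ℝ := if x ∈ S then 0 else G (insert x S)

/-- Weighted count of ordered extensions of `S` by `n` elements. -/
def mN (Indep : Finset X → Prop) (ω : X → ℝ) : ℕ → Finset X → ℝ
  | 0 => fun S => if Indep S then 1 else 0
  | n + 1 => fun S => ∑ z, ω z * mD z (mN Indep ω n) S

/-- A row of the Hessian. -/
def mRow (Indep : Finset X → Prop) (ω : X → ℝ) (n : ℕ) (S : Finset X) (v : X → ℝ) (y : ℝ) (x : X) : ℝ :=
  ∑ x', mD x (mD x' (mN Indep ω n)) S * v x' + mD x (mN Indep ω n) S * y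

/-- The pairing with `ω`. -/
def mB (Indep : Finset X → Prop) (ω : X → ℝ) (n : ℕ) (S : Finset X) (v : X → ℝ) (y : ℝ) : ℝ :=
  ∑ x, mD x (mN Indep ω (n + 1)) S * v x + y * mN Indep ω (n + 1) S

/-- The quadratic form. -/
def mQ (Indep : Finset X → Prop) (ω : X → ℝ) (c : ℝ) (n : ℕ) (S : Finset X) (v : X → ℝ) (y : ℝ) : ℝ :=
  ∑ x, ∑ x', mD x (mD x' (mN Indep ω n)) S * v x * v x' + 2 * y * ∑ x, mD x (mN Indep ω n) S * v x
    + (c * mN Indep ω n S) * y ^ 2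

lemma mD_comm (x y : X) (G : Finset X → ℝ) (S : Finset X) : mD x (mD y G) S = mD y (mD x G) S := by
  unfold mD
  by_cases hx : x ∈ S <;> by_cases hy : y ∈ S <;> by_cases hxy : x = y <;>
    simp [hx, hy, hxy, Finset.insert_comm, eq_comm]
  

lemma mN_succ (Indep : Finset X → Prop) (ω : X → ℝ) (n : ℕ) (S : Finset X) :
    mN Indep ω (n + 1) S = ∑ z, ω z * mD z (mN Indep ω n) S := rfl

lemma mD_mN_succ (Indep : Finset X → Prop) (ω : X → ℝ) (n : ℕ) (x : X) (S : Finset X) :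
    mD x (mN Indep ω (n + 1)) S = ∑ z, ω z * mD x (mD z (mN Indep ω n)) S := by
  by_cases hx : x ∈ S
  · simp [mD, hx]
  · have : ∀ G : Finset X → ℝ, mD x G S = G (insert x S) := fun G => by simp [mD, hx]
    simp only [this]; rfl

lemma mD_mD_mN_succ (Indep : Finset X → Prop) (ω : X → ℝ) (n : ℕ) (x y : X) (S : Finset X) :
    mD x (mD y (mN Indep ω (n + 1))) S = ∑ z, ω z * mD z (mD x (mD y (mN Indep ω n))) S := by
  have h : ∀ z, mD z (mD x (mD y (mN Indep ω n))) S = mD x (fun S => mD y (mD z (mN Indep ω n)) S) S := by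
    intro z
    rw [mD_comm]
    congr 1
    funext S
    rw [mD_comm]
  simp only [h]
  by_cases hx : x ∈ S
  · simp [mD, hx]
  · have : ∀ G : Finset X → ℝ, mD x G S = G (insert x S) := fun G => by simp [mD, hx]
    simp only [this]; rw [mD_mN_succ]

lemma mB_eq (Indep : Finset X → Prop) (ω : X → ℝ) (n : ℕ) (S : Finset X) (v : X → ℝ) (y : ℝ) :
    ∑ x, ω x * mRow Indep ω n S v y x = mB Indep ω n S v y := by
  unfold mRow mB
  simp only [mul_add, Finset.sum_add_distrib, Finset.mul_sum]
  congr 1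
  · rw [Finset.sum_comm]
    refine Finset.sum_congr rfl fun x _ => ?_
    rw [mD_mN_succ, Finset.sum_mul]
    refine Finset.sum_congr rfl fun z _ => ?_
    rw [mD_comm]; ring
  · rw [mN_succ, Finset.mul_sum]
    refine Finset.sum_congr rfl fun z _ => ?_
    ring

lemma euler2 (Indep : Finset X → Prop) (ω : X → ℝ) (n : ℕ) (S : Finset X) :
    ∑ x, mD x (mN Indep ω (n + 1)) S * ω x = mN Indep ω (n + 2) S := by
  rw [mN_succ]
  exact Finset.sum_congr rfl fun x _ => mul_comm _ _

lemma euler1 (Indep : Finset X → Prop) (ω : X → ℝ) (n : ℕ) (S : Finset X) (x : X) :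
    mD x (mN Indep ω (n + 1)) S = ∑ y, mD x (mD y (mN Indep ω n)) S * ω y := by
  rw [mD_mN_succ]
  exact Finset.sum_congr rfl fun x _ => mul_comm _ _

lemma mQ_expand (Indep : Finset X → Prop) (ω : X → ℝ) (c : ℝ) (n : ℕ) (S : Finset X) (v u : X → ℝ) (y t : ℝ) :
    mQ Indep ω c n S (fun x => v x + t * u x) y = mQ Indep ω c n S v y
      + 2 * t * ∑ x, u x * mRow Indep ω n S v y x
      + t ^ 2 * ∑ x, ∑ x', mD x (mD x' (mN Indep ω n)) S * u x * u x' := by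
  have e1 : ∑ x, ∑ x', mD x (mD x' (mN Indep ω n)) S * v x * u x' = ∑ x, ∑ x', mD x (mD x' (mN Indep ω n)) S * u x * v x' := by
    rw [Finset.sum_comm]
    refine Finset.sum_congr rfl fun x _ => Finset.sum_congr rfl fun x' _ => ?_
    rw [mD_comm]; ring
  have e2 : ∑ x, ∑ x', mD x (mD x' (mN Indep ω n)) S * (v x + t * u x) * (v x' + t * u x')
      = ∑ x, ∑ x', mD x (mD x' (mN Indep ω n)) S * v x * v x'
        + t * ∑ x, ∑ x', mD x (mD x' (mN Indep ω n)) S * v x * u x'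
        + t * ∑ x, ∑ x', mD x (mD x' (mN Indep ω n)) S * u x * v x'
        + t ^ 2 * ∑ x, ∑ x', mD x (mD x' (mN Indep ω n)) S * u x * u x' := by
    simp only [Finset.mul_sum, ← Finset.sum_add_distrib]
    refine Finset.sum_congr rfl fun x _ => Finset.sum_congr rfl fun x' _ => ?_
    ring
  have e3 : ∑ x, u x * mRow Indep ω n S v y x = ∑ x, ∑ x', mD x (mD x' (mN Indep ω n)) S * u x * v x' + y * ∑ x, mD x (mN Indep ω n) S * u x := by
    unfold mRow
    simp only [mul_add, Finset.sum_add_distrib, Finset.mul_sum]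
    congr 1
    · refine Finset.sum_congr rfl fun x _ => Finset.sum_congr rfl fun x' _ => ?_
      ring
    · refine Finset.sum_congr rfl fun x _ => ?_
      ring
  have e4 : ∑ x, mD x (mN Indep ω n) S * (v x + t * u x) = ∑ x, mD x (mN Indep ω n) S * v x + t * ∑ x, mD x (mN Indep ω n) S * u x := by
    simp only [Finset.mul_sum, ← Finset.sum_add_distrib]
    refine Finset.sum_congr rfl fun x _ => ?_
    ring
  unfold mQ
  rw [e2, e3, e4, e1]; ring

lemma sumH_ω (Indep : Finset X → Prop) (ω : X → ℝ) (n : ℕ) (S : Finset X) :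
    ∑ x, ∑ x', mD x (mD x' (mN Indep ω n)) S * ω x * ω x' = mN Indep ω (n + 2) S := by
  rw [← euler2]
  refine Finset.sum_congr rfl fun x _ => ?_
  rw [euler1, Finset.sum_mul]
  refine Finset.sum_congr rfl fun x' _ => ?_
  ring

lemma mB_shift (Indep : Finset X → Prop) (ω : X → ℝ) (n : ℕ) (S : Finset X) (v u : X → ℝ) (y t : ℝ) :
    mB Indep ω n S (fun x => v x + t * u x) y = mB Indep ω n S v y + t * ∑ x, mD x (mN Indep ω (n + 1)) S * u x := by
  unfold mB
  simp only [mul_add, Finset.sum_add_distrib, Finset.mul_sum]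
  have : ∀ x, mD x (mN Indep ω (n + 1)) S * (t * u x) = t * (mD x (mN Indep ω (n + 1)) S * u x) := fun x => by ring
  simp only [this]; ring

lemma hyp_of (Indep : Finset X → Prop) (ω : X → ℝ) (c : ℝ) (n : ℕ) (S : Finset X)
    (hpos : 0 < mN Indep ω (n + 2) S)
    (h : ∀ v y, mB Indep ω n S v y = 0 → mQ Indep ω c n S v y ≤ 0) (v : X → ℝ) (y : ℝ) :
    mN Indep ω (n + 2) S * mQ Indep ω c n S v y ≤ mB Indep ω n S v y ^ 2 := by
  have := h (fun x => v x + (- (mB Indep ω n S v y / mN Indep ω (n + 2) S)) * ω x) y (by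
    rw [mB_shift, euler2]; field_simp; ring)
  rw [mQ_expand, mB_eq, sumH_ω] at this
  have h2 := mul_le_mul_of_nonneg_left this hpos.le
  field_simp at h2
  nlinarith

lemma row_succ (Indep : Finset X → Prop) (ω : X → ℝ) (n : ℕ) (S : Finset X) (v : X → ℝ) (y : ℝ) (x : X) :
    mRow Indep ω (n + 1) S v y x = if x ∈ S then 0 else mB Indep ω n (insert x S) v y := by
  unfold mRow mB
  by_cases hx : x ∈ S
  · simp [mD, hx]
  · have : ∀ G : Finset X → ℝ, mD x G S = G (insert x S) := fun G => by simp [mD, hx]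
    simp only [this, hx, if_false]; ring

lemma mQ_succ (Indep : Finset X → Prop) (ω : X → ℝ) (c : ℝ) (n : ℕ) (S : Finset X) (v : X → ℝ) (y : ℝ) :
    mQ Indep ω c (n + 1) S v y = ∑ z, ω z * (if z ∈ S then 0 else mQ Indep ω c n (insert z S) v y) := by
  have e : ∀ z, (if z ∈ S then 0 else mQ Indep ω c n (insert z S) v y)
      = ∑ x, ∑ x', mD z (mD x (mD x' (mN Indep ω n))) S * v x * v x' + 2 * y * ∑ x, mD z (mD x (mN Indep ω n)) S * v x
    + (c * mD z (mN Indep ω n) S) * y ^ 2 := by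
    intro z
    by_cases hz : z ∈ S
    · simp [mD, hz]
    · have : ∀ G : Finset X → ℝ, mD z G S = G (insert z S) := fun G => by simp [mD, hz]
      simp only [this, hz, if_false]; rfl
  simp only [e, mul_add, Finset.sum_add_distrib]
  unfold mQ
  congr 1
  · congr 1
    · simp only [mD_mD_mN_succ, Finset.mul_sum, Finset.sum_mul]
      rw [Finset.sum_comm' (t' := Finset.univ) (s' := fun _ => Finset.univ) (by simp)]
      conv_rhs => rw [Finset.sum_comm]
      rw [Finset.sum_comm]
      refine Finset.sum_congr rfl fun x _ => ?_
      conv_rhs => rw [Finset.sum_comm]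
      refine Finset.sum_congr rfl fun x' _ => Finset.sum_congr rfl fun z _ => ?_
      ring
    · simp only [mD_mN_succ, Finset.mul_sum, Finset.sum_mul]
      rw [Finset.sum_comm]
      refine Finset.sum_congr rfl fun x _ => Finset.sum_congr rfl fun z _ => ?_
      rw [mD_comm]; ring
  · rw [mN_succ]
    simp only [Finset.mul_sum, Finset.sum_mul]
    refine Finset.sum_congr rfl fun z _ => ?_
    ring

/-- Kernel property from equality. -/
lemma row_zero (Indep : Finset X → Prop) (ω : X → ℝ) (c : ℝ) (n : ℕ) (S : Finset X)
    (hpos : 0 < mN Indep ω (n + 2) S)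
    (h : ∀ v y, mB Indep ω n S v y = 0 → mQ Indep ω c n S v y ≤ 0) (v : X → ℝ) (y : ℝ)
    (hB : mB Indep ω n S v y = 0) (hQ : mQ Indep ω c n S v y = 0) (x : X) :
    mRow Indep ω n S v y x = 0 := by
  set r := mRow Indep ω n S v y x with hr
  set N := mN Indep ω (n + 2) S
  set g := mD x (mN Indep ω (n + 1)) S with hg
  have key : ∀ t : ℝ, N * (2 * t * r) ≤ (t * g) ^ 2 := by
    intro t
    have := hyp_of Indep ω c n S hpos h (fun x' => v x' + t * (if x' = x then 1 else 0)) y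
    rw [mQ_expand, mB_shift, hB, hQ] at this
    have hxx : mD x (mD x (mN Indep ω n)) S = 0 := by simp [mD]
    simp [hxx] at this
    simpa [hr, hg] using this
  have k := key (r * (N / (g ^ 2 + 1)))
  by_contra hne
  have hr2 : 0 < r ^ 2 := by positivity
  have e1 : N * (2 * (r * (N / (g ^ 2 + 1))) * r) = 2 * r ^ 2 * N ^ 2 * (g^2+1) / (g ^ 2 + 1) ^ 2 := by
    field_simp
  have e2 : (r * (N / (g ^ 2 + 1)) * g) ^ 2 = r ^ 2 * N ^ 2 * g ^ 2 / (g ^ 2 + 1) ^ 2 := by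
    field_simp
  rw [e1, e2, div_le_div_iff_of_pos_right (by positivity)] at k
  have : 0 < r ^ 2 * N ^ 2 := by positivity
  nlinarith [sq_nonneg g]

lemma mN_nonneg (Indep : Finset X → Prop) (ω : X → ℝ) (hω : ∀ x, 0 < ω x) (n : ℕ) :
    ∀ S, 0 ≤ mN Indep ω n S := by
  induction n with
  | zero => intro S; unfold mN; split_ifs <;> norm_num
  | succ n ih =>
    intro S
    rw [mN_succ]
    refine Finset.sum_nonneg fun z _ => mul_nonneg (hω z).le ?_
    unfold mD; split_ifs
    · exact le_rfl
    · exact ih _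

lemma mN_eq_zero (Indep : Finset X → Prop) (ω : X → ℝ)
    (h_hered : ∀ S T : Finset X, S ⊆ T → Indep T → Indep S) (n : ℕ) :
    ∀ S, ¬ Indep S → mN Indep ω n S = 0 := by
  induction n with
  | zero => intro S hS; simp [mN, hS]
  | succ n ih =>
    intro S hS
    rw [mN_succ]
    refine Finset.sum_eq_zero fun z _ => ?_
    unfold mD; split_ifs
    · simp
    · rw [ih _ (fun h => hS (h_hered _ _ (Finset.subset_insert _ _) h))]; simp

lemma mN_pos (Indep : Finset X → Prop) (ω : X → ℝ) (hω : ∀ x, 0 < ω x)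
    (h_exch : ∀ S T : Finset X, Indep S → Indep T → S.card < T.card →
      ∃ x ∈ T, x ∉ S ∧ Indep (insert x S)) (T : Finset X) (hT : Indep T) (n : ℕ) :
    ∀ S, Indep S → S.card + n ≤ T.card → 0 < mN Indep ω n S := by
  induction n with
  | zero => intro S hS _; simp [mN, hS]
  | succ n ih =>
    intro S hS hc
    obtain ⟨x, _, hxS, hx⟩ := h_exch S T hS hT (by omega)
    have h1 := ih (insert x S) hx (by rw [Finset.card_insert_of_notMem hxS]; omega)
    rw [mN_succ]
    refine lt_of_lt_of_le (mul_pos (hω x) h1) ?_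
    have : ω x * mN Indep ω n (insert x S) = ω x * mD x (mN Indep ω n) S := by simp [mD, hxS]
    rw [this]
    refine Finset.single_le_sum (f := fun z => ω z * mD z (mN Indep ω n) S) (fun z _ => mul_nonneg (hω z).le ?_) (Finset.mem_univ x)
    unfold mD; split_ifs
    · exact le_rfl
    · exact mN_nonneg Indep ω hω n _

/-- The induction step. -/
lemma hyp_step (Indep : Finset X → Prop) (ω : X → ℝ) (hω : ∀ x, 0 < ω x)
    (h_hered : ∀ S T : Finset X, S ⊆ T → Indep T → Indep S)
    (h_exch : ∀ S T : Finset X, Indep S → Indep T → S.card < T.card →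
      ∃ x ∈ T, x ∉ S ∧ Indep (insert x S)) (T : Finset X) (hT : Indep T) (c : ℝ) (n : ℕ)
    (S : Finset X) (hS : Indep S) (hc : S.card + (n + 1) + 2 ≤ T.card)
    (ih : ∀ x, x ∉ S → Indep (insert x S) → ∀ v y, mN Indep ω (n + 2) (insert x S) * mQ Indep ω c n (insert x S) v y ≤ mB Indep ω n (insert x S) v y ^ 2)
    (v : X → ℝ) (y : ℝ) (hB : mB Indep ω (n + 1) S v y = 0) :
    mQ Indep ω c (n + 1) S v y ≤ 0 := by
  have nn : ∀ x m (S : Finset X), 0 ≤ mD x (mN Indep ω m) S := by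
    intro x m S; unfold mD; split_ifs
    · exact le_rfl
    · exact mN_nonneg Indep ω hω _ _
  have gne : ∀ x, x ∉ S → Indep (insert x S) → 0 < mN Indep ω (n + 2) (insert x S) := by
    intro x hx hi
    exact mN_pos Indep ω hω h_exch T hT _ _ hi (by rw [Finset.card_insert_of_notMem hx]; omega)
  have gz : ∀ x, mD x (mN Indep ω (n + 2)) S = 0 → x ∈ S ∨ ¬ Indep (insert x S) := by
    intro x hx
    by_contra hcon
    push Not at hcon
    have := gne x hcon.1 hcon.2
    simp [mD, hcon.1] at hx
    linarith
  have hH : ∀ x z, x ∉ S → z ∉ insert x S → Indep (insert z (insert x S)) → 0 < mD x (mD z (mN Indep ω (n + 1))) S := by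
    intro x z hx hz hi
    have := mN_pos Indep ω hω h_exch T hT (n + 1) _ hi (by
      rw [Finset.card_insert_of_notMem hz, Finset.card_insert_of_notMem hx]; omega)
    simpa [mD, hx, hz] using this
  have hdz : ∀ m x, (x ∈ S ∨ ¬ Indep (insert x S)) → mD x (mN Indep ω m) S = 0 := by
    intro m x hx
    unfold mD; split_ifs with h
    · rfl
    · exact mN_eq_zero Indep ω h_hered _ _ (hx.resolve_left h)
  refine spec_mat (fun x y => mD x (mD y (mN Indep ω (n + 1))) S) ω (fun x => mD x (mN Indep ω (n + 1)) S)
    (fun x => mD x (mN Indep ω (n + 2)) S) (c * mN Indep ω (n + 1) S) hω ?_ ?_ ?_ ?_ ?_ ?_ v y ?_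
  · intro x y; exact mD_comm _ _ _ _
  · intro x y
    show 0 ≤ mD x _ S
    unfold mD; split_ifs
    · exact le_rfl
    · exact le_rfl
    · exact mN_nonneg Indep ω hω _ _
  · intro x; exact euler1 Indep ω (n + 1) S x
  · intro x hx; exact hdz _ x (gz x hx)
  · intro x z hx hz
    have hx' : x ∉ S ∧ Indep (insert x S) := by
      by_contra hcon; exact hx (hdz _ x (by tauto))
    have hz' : z ∉ S ∧ Indep (insert z S) := by
      by_contra hcon; exact hz (hdz _ z (by tauto))
    by_cases hxz : z ≠ x ∧ Indep (insert z (insert x S))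
    · left
      exact hH x z hx'.1 (by simp [hxz.1, hz'.1]) hxz.2
    · right
      obtain ⟨t, _, ht, hti⟩ := h_exch (insert x S) T hx'.2 hT (by rw [Finset.card_insert_of_notMem hx'.1]; omega)
      refine ⟨t, hH x t hx'.1 ht hti, ?_⟩
      by_cases hzx : z = x
      · rw [hzx]; exact hH x t hx'.1 ht hti
      have hni : ¬ Indep (insert z (insert x S)) := fun h => hxz ⟨hzx, h⟩
      obtain ⟨q, hq, hq2, hqi⟩ := h_exch (insert z S) (insert t (insert x S)) hz'.2 hti (by
        rw [Finset.card_insert_of_notMem ht, Finset.card_insert_of_notMem hx'.1, Finset.card_insert_of_notMem hz'.1]; omega)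
      simp only [Finset.mem_insert] at hq
      rcases hq with rfl | rfl | hq
      · exact hH z q hz'.1 hq2 hqi
      · exact absurd (by rwa [Finset.insert_comm] at hqi) hni
      · exact absurd (Finset.mem_insert_of_mem hq) hq2
  · intro v y
    have e := mQ_succ Indep ω c n S v y
    have : mQ Indep ω c (n + 1) S v y ≤ ∑ x, ω x / mD x (mN Indep ω (n + 2)) S * mRow Indep ω (n + 1) S v y x ^ 2 := by
      rw [e]
      refine Finset.sum_le_sum fun x _ => ?_
      rw [row_succ]
      by_cases hx : x ∈ S
      · simp [hx]
      · simp only [hx, if_false]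
        by_cases hi : Indep (insert x S)
        · have h1 := gne x hx hi
          have h2 := ih x hx hi v y
          have h3 : mD x (mN Indep ω (n + 2)) S = mN Indep ω (n + 2) (insert x S) := by simp [mD, hx]
          rw [h3, div_mul_eq_mul_div, le_div_iff₀ h1]
          nlinarith [mul_le_mul_of_nonneg_left h2 (hω x).le]
        · have h0 : ∀ m S', insert x S ⊆ S' → mN Indep ω m S' = 0 := fun m S' hs =>
            mN_eq_zero Indep ω h_hered _ _ (fun h => hi (h_hered _ _ hs h))
          have : mQ Indep ω c n (insert x S) v y = 0 := by
            have d1 : ∀ a S', insert x S ⊆ S' → mD a (mN Indep ω n) S' = 0 := by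
              intro a S' hs
              unfold mD; split_ifs
              · rfl
              · exact h0 _ _ (hs.trans (Finset.subset_insert _ _))
            have d2 : ∀ a b, mD a (mD b (mN Indep ω n)) (insert x S) = 0 := by
              intro a b
              rw [mD]; split_ifs
              · rfl
              · exact d1 _ _ (Finset.subset_insert _ _)
            unfold mQ
            simp [d2, d1 _ _ (Finset.Subset.refl _), h0 _ _ (Finset.Subset.refl _)]
          rw [this, hdz _ x (Or.inr hi)]; simp
    exact this
  · rw [euler2]
    have : ∑ x, mD x (mN Indep ω (n + 1 + 1)) S * v x + y * mN Indep ω (n + 1 + 1) S = 0 := hB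
    exact this

/-! ### Parallel classes -/

lemma par_rel_trans (Indep : Finset X → Prop)
    (h_exch : ∀ S T : Finset X, Indep S → Indep T → S.card < T.card →
      ∃ x ∈ T, x ∉ S ∧ Indep (insert x S)) (S : Finset X) (i j l : X)
    (hi : i ∈ mCont Indep S) (hj : j ∈ mCont Indep S) (hl : l ∈ mCont Indep S)
    (hij : j = i ∨ ¬ Indep (insert j (insert i S))) (hjl : l = j ∨ ¬ Indep (insert l (insert j S))) :
    l = i ∨ ¬ Indep (insert l (insert i S)) := by
  rcases hij with rfl | hij
  · exact hjl
  rcases hjl with rfl | hjl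
  · exact Or.inr hij
  by_contra hcon
  push Not at hcon
  obtain ⟨hli, hind⟩ := hcon
  simp only [mCont, Finset.mem_filter, Finset.mem_univ, true_and] at hi hj hl
  obtain ⟨q, hq, hq2, hqi⟩ := h_exch (insert j S) (insert l (insert i S)) hj.2 hind (by
    have hlm : l ∉ insert i S := by simp [hli, hl.1]
    rw [Finset.card_insert_of_notMem hlm, Finset.card_insert_of_notMem hi.1, Finset.card_insert_of_notMem hj.1]; omega)
  simp only [Finset.mem_insert] at hq
  rcases hq with rfl | rfl | hq
  · exact hjl hqi
  · rw [Finset.insert_comm] at hqi; exact hij hqi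
  · exact hq2 (Finset.mem_insert_of_mem hq)

lemma mem_parClass_iff (Indep : Finset X → Prop)
    (h_exch : ∀ S T : Finset X, Indep S → Indep T → S.card < T.card →
      ∃ x ∈ T, x ∉ S ∧ Indep (insert x S)) (S : Finset X) (i : X) (hi : i ∈ mCont Indep S) (j : X) :
    j ∈ mParClass Indep S i ↔ j ∈ mCont Indep S ∧ mParClass Indep S j = mParClass Indep S i := by
  constructor
  · intro h
    unfold mParClass at h
    rw [Finset.mem_filter] at h
    obtain ⟨hj, hij⟩ := h
    refine ⟨hj, ?_⟩
    have hji : i = j ∨ ¬ Indep (insert i (insert j S)) := by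
      rcases hij with h | h
      · exact Or.inl h.symm
      · right; rwa [Finset.insert_comm]
    ext l
    unfold mParClass
    simp only [Finset.mem_filter]
    constructor
    · rintro ⟨hl, h⟩; exact ⟨hl, par_rel_trans Indep h_exch S i j l hi hj hl hij h⟩
    · rintro ⟨hl, h⟩; exact ⟨hl, par_rel_trans Indep h_exch S j i l hj hi hl hji h⟩
  · rintro ⟨hj, h⟩
    rw [← h]
    unfold mParClass
    rw [Finset.mem_filter]
    exact ⟨hj, Or.inl rfl⟩

lemma sum_classes (Indep : Finset X → Prop)
    (h_exch : ∀ S T : Finset X, Indep S → Indep T → S.card < T.card →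
      ∃ x ∈ T, x ∉ S ∧ Indep (insert x S)) (S : Finset X) (f : X → ℝ) :
    ∑ C ∈ mParClasses Indep S, ∑ x ∈ C, f x = ∑ x ∈ mCont Indep S, f x := by
  unfold mParClasses
  apply Finset.sum_image'
  intro i hi
  refine Finset.sum_congr ?_ fun _ _ => rfl
  ext j
  rw [mem_parClass_iff Indep h_exch S i hi, Finset.mem_filter]

lemma class_eq (Indep : Finset X → Prop)
    (h_exch : ∀ S T : Finset X, Indep S → Indep T → S.card < T.card →
      ∃ x ∈ T, x ∉ S ∧ Indep (insert x S)) (S C : Finset X) (hC : C ∈ mParClasses Indep S)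
    (x : X) (hx : x ∈ C) : x ∈ mCont Indep S ∧ mParClass Indep S x = C := by
  unfold mParClasses at hC
  rw [Finset.mem_image] at hC
  obtain ⟨i, hi, rfl⟩ := hC
  exact (mem_parClass_iff Indep h_exch S i hi x).1 hx

lemma sum_mD0 (Indep : Finset X → Prop) (ω : X → ℝ) (S : Finset X) (f : X → ℝ) :
    ∑ x, mD x (mN Indep ω 0) S * f x = ∑ x ∈ mCont Indep S, f x := by
  unfold mCont
  rw [Finset.sum_filter]
  refine Finset.sum_congr rfl fun x _ => ?_
  by_cases h1 : x ∈ S <;> by_cases h2 : Indep (insert x S) <;> simp [mD, mN, h1, h2]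

lemma mD0_not (Indep : Finset X → Prop) (ω : X → ℝ)
    (h_hered : ∀ S T : Finset X, S ⊆ T → Indep T → Indep S) (S : Finset X) (x : X) (hx : x ∉ mCont Indep S) (y : X) :
    mD x (mD y (mN Indep ω 0)) S = 0 := by
  simp only [mCont, Finset.mem_filter, Finset.mem_univ, true_and, not_and] at hx
  by_cases h1 : x ∈ S
  · simp [mD, h1]
  · have h2 : ¬ Indep (insert y (insert x S)) := fun h => hx h1 (h_hered _ _ (Finset.subset_insert _ _) h)
    simp only [mD, h1, mN, h2, if_false]; split_ifs <;> rfl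

lemma sum_mD0_row (Indep : Finset X → Prop) (ω : X → ℝ)
    (h_hered : ∀ S T : Finset X, S ⊆ T → Indep T → Indep S) (S : Finset X) (f : X → ℝ) (x : X)
    (hx : x ∈ mCont Indep S) :
    ∑ y, mD x (mD y (mN Indep ω 0)) S * f y = ∑ y ∈ mCont Indep S, f y - ∑ y ∈ mParClass Indep S x, f y := by
  have hx' := hx
  simp only [mCont, Finset.mem_filter, Finset.mem_univ, true_and] at hx'
  have e : ∑ y, mD x (mD y (mN Indep ω 0)) S * f y = ∑ y ∈ (mCont Indep S).filter (fun y => ¬ (y = x ∨ ¬ Indep (insert y (insert x S)))), f y := by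
    have : (mCont Indep S).filter (fun y => ¬ (y = x ∨ ¬ Indep (insert y (insert x S)))) = Finset.univ.filter (fun y => y ∉ insert x S ∧ Indep (insert y (insert x S))) := by
      ext y
      simp only [mCont, Finset.mem_filter, Finset.mem_univ, true_and, not_or, not_not, Finset.mem_insert]
      constructor
      · rintro ⟨⟨a, b⟩, c, d⟩; exact ⟨⟨c, a⟩, d⟩
      · rintro ⟨⟨a, b⟩, c⟩
        refine ⟨⟨b, h_hered _ _ ?_ c⟩, a, c⟩
        exact Finset.insert_subset_insert _ (Finset.subset_insert _ _)
    rw [this, Finset.sum_filter]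
    refine Finset.sum_congr rfl fun y _ => ?_
    by_cases h1 : y ∈ insert x S <;> by_cases h2 : Indep (insert y (insert x S)) <;> simp only [mD, mN, hx'.1, h1, h2, if_true, if_false] <;> simp
  rw [e, ← Finset.sum_filter_add_sum_filter_not (mCont Indep S) (fun y => y = x ∨ ¬ Indep (insert y (insert x S))) f]
  unfold mParClass
  ring

lemma sum_mD0_bil (Indep : Finset X → Prop) (ω : X → ℝ)
    (h_hered : ∀ S T : Finset X, S ⊆ T → Indep T → Indep S)
    (h_exch : ∀ S T : Finset X, Indep S → Indep T → S.card < T.card →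
      ∃ x ∈ T, x ∉ S ∧ Indep (insert x S)) (S : Finset X) (f f' : X → ℝ) :
    ∑ x, ∑ y, mD x (mD y (mN Indep ω 0)) S * f x * f' y =
      (∑ C ∈ mParClasses Indep S, ∑ x ∈ C, f x) * (∑ C ∈ mParClasses Indep S, ∑ x ∈ C, f' x)
       - ∑ C ∈ mParClasses Indep S, (∑ x ∈ C, f x) * (∑ x ∈ C, f' x) := by
  have e1 : ∑ x, ∑ y, mD x (mD y (mN Indep ω 0)) S * f x * f' y = ∑ x ∈ mCont Indep S, f x * (∑ y ∈ mCont Indep S, f' y - ∑ y ∈ mParClass Indep S x, f' y) := by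
    rw [← Finset.sum_subset (Finset.subset_univ (mCont Indep S))]
    · refine Finset.sum_congr rfl fun x hx => ?_
      rw [← sum_mD0_row Indep ω h_hered S f' x hx, Finset.mul_sum]
      refine Finset.sum_congr rfl fun y _ => ?_
      ring
    · intro x _ hx
      refine Finset.sum_eq_zero fun y _ => ?_
      rw [mD0_not Indep ω h_hered S x hx]; ring
  rw [e1, ← sum_classes Indep h_exch S, Finset.sum_mul, ← Finset.sum_sub_distrib]
  refine Finset.sum_congr rfl fun C hC => ?_
  rw [← sum_classes Indep h_exch S f', ← mul_sub, Finset.sum_mul]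
  refine Finset.sum_congr rfl fun x hx => ?_
  rw [(class_eq Indep h_exch S C hC x hx).2]

/-- Real inequality used for the base case. -/
lemma base_real {ι : Type*} (s : Finset ι) (a w : ι → ℝ) (ha : ∀ i ∈ s, 0 < a i) (y p : ℝ)
    (hs : 2 ≤ s.card) (hp : (s.card : ℝ) ≤ p)
    (hB : (∑ i ∈ s, a i) * (∑ i ∈ s, w i + y) = ∑ i ∈ s, a i * w i) :
    (∑ i ∈ s, w i) * (∑ i ∈ s, w i) - ∑ i ∈ s, w i * w i + 2 * y * ∑ i ∈ s, w i + (1 + 1 / (p - 1)) * y ^ 2 ≤ 0 := by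
  set W := ∑ i ∈ s, w i with hW
  set A := ∑ i ∈ s, a i with hA
  set Y := W + y with hY
  set m : ℝ := (s.card : ℝ) with hm
  have hm2 : (2 : ℝ) ≤ m := by rw [hm]; exact_mod_cast hs
  set D := ∑ i ∈ s, (w i - Y) with hD
  set D2 := ∑ i ∈ s, (w i - Y) ^ 2 with hD2
  set A2 := ∑ i ∈ s, a i ^ 2 with hA2
  have hne : s.Nonempty := Finset.card_pos.1 (by omega)
  have hA2pos : 0 < A2 := Finset.sum_pos (fun i hi => pow_pos (ha i hi) 2) hne
  have hD2nn : 0 ≤ D2 := Finset.sum_nonneg fun i _ => sq_nonneg _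
  have hAA : A2 ≤ A ^ 2 := by
    rw [hA2, hA, pow_two, Finset.sum_mul]
    refine Finset.sum_le_sum fun i hi => ?_
    rw [pow_two]
    exact mul_le_mul_of_nonneg_left (Finset.single_le_sum (fun j hj => (ha j hj).le) hi) (ha i hi).le
  have hort : ∑ i ∈ s, a i * (w i - Y) = 0 := by
    simp only [mul_sub, Finset.sum_sub_distrib, ← Finset.sum_mul]
    linarith
  have hDW : D = W - m * Y := by
    simp [hD, Finset.sum_sub_distrib, hW, hm]
  have hww : ∑ i ∈ s, w i * w i = D2 + 2 * Y * W - m * Y ^ 2 := by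
    have : D2 = ∑ i ∈ s, (w i * w i - 2 * Y * w i + Y ^ 2) := Finset.sum_congr rfl fun i _ => by ring
    rw [this, Finset.sum_add_distrib, Finset.sum_sub_distrib, ← Finset.mul_sum]
    simp [hm, hW]
    ring
  have hCS : D ^ 2 ≤ (m - 1) * D2 := by
    set t := A / A2 with ht
    have h1 : D = ∑ i ∈ s, (1 - t * a i) * (w i - Y) := by
      have : ∑ i ∈ s, (1 - t * a i) * (w i - Y) = D - t * ∑ i ∈ s, a i * (w i - Y) := by
        rw [hD, Finset.mul_sum, ← Finset.sum_sub_distrib]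
        exact Finset.sum_congr rfl fun i _ => by ring
      rw [this, hort]; ring
    have h2 := Finset.sum_mul_sq_le_sq_mul_sq s (fun i => 1 - t * a i) (fun i => w i - Y)
    have h3 : ∑ i ∈ s, (1 - t * a i) ^ 2 = m - A ^ 2 / A2 := by
      have : ∑ i ∈ s, (1 - t * a i) ^ 2 = m - 2 * t * A + t ^ 2 * A2 := by
        have : ∑ i ∈ s, (1 - t * a i) ^ 2 = ∑ i ∈ s, (1 - 2 * t * a i + t ^ 2 * a i ^ 2) := Finset.sum_congr rfl fun i _ => by ring
        rw [this, Finset.sum_add_distrib, Finset.sum_sub_distrib, ← Finset.mul_sum, ← Finset.mul_sum]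
        simp [hm, hA, hA2]
      rw [this, ht]; field_simp; ring
    rw [← h1, h3] at h2
    have h4 : 1 ≤ A ^ 2 / A2 := by rw [le_div_iff₀ hA2pos]; linarith
    nlinarith
  have hyD : y = - (D + (m - 1) * Y) := by rw [hDW, hY]; ring
  have hp1 : 0 < p - 1 := by linarith
  have hinv : 1 / (p - 1) ≤ 1 / (m - 1) := one_div_le_one_div_of_le (by linarith) (by linarith)
  have hy2 : y ^ 2 / (m - 1) = D ^ 2 / (m - 1) + 2 * D * Y + (m - 1) * Y ^ 2 := by
    have : m - 1 ≠ 0 := by linarith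
    rw [hyD]; field_simp; ring
  have hD3 : D ^ 2 / (m - 1) ≤ D2 := by rw [div_le_iff₀ (by linarith)]; linarith
  have h5 : 1 / (p - 1) * y ^ 2 ≤ y ^ 2 / (m - 1) := by
    rw [div_eq_mul_one_div (y ^ 2), mul_comm (y ^ 2)]
    exact mul_le_mul_of_nonneg_right hinv (sq_nonneg y)
  have h6 : W = D + m * Y := by linarith
  rw [hww]
  have h7 : W * W + 2 * y * W + y ^ 2 = Y ^ 2 := by rw [hY]; ring
  have : D2 + 2 * Y * W - m * Y ^ 2 - Y ^ 2 - (D ^ 2 / (m - 1) + 2 * D * Y + (m - 1) * Y ^ 2) = D2 - D ^ 2 / (m - 1) := by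
    rw [h6]; ring
  nlinarith

lemma two_le_card (Indep : Finset X → Prop)
    (h_exch : ∀ S T : Finset X, Indep S → Indep T → S.card < T.card →
      ∃ x ∈ T, x ∉ S ∧ Indep (insert x S))
    (h_hered : ∀ S T : Finset X, S ⊆ T → Indep T → Indep S) (T : Finset X) (hT : Indep T)
    (S : Finset X) (hS : Indep S) (hc : S.card + 2 ≤ T.card) : 2 ≤ (mParClasses Indep S).card := by
  obtain ⟨x, _, hx, hxi⟩ := h_exch S T hS hT (by omega)
  obtain ⟨y, _, hy, hyi⟩ := h_exch (insert x S) T hxi hT (by rw [Finset.card_insert_of_notMem hx]; omega)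
  have hxC : x ∈ mCont Indep S := by simp [mCont, hx, hxi]
  have hyS : y ∉ S := fun h => hy (Finset.mem_insert_of_mem h)
  have hyC : y ∈ mCont Indep S := by
    simp only [mCont, Finset.mem_filter, Finset.mem_univ, true_and]
    exact ⟨hyS, h_hered _ _ (Finset.insert_subset_insert _ (Finset.subset_insert _ _)) hyi⟩
  have : 1 < (mParClasses Indep S).card := by
    rw [Finset.one_lt_card]
    refine ⟨_, Finset.mem_image_of_mem _ hxC, _, Finset.mem_image_of_mem _ hyC, fun h => ?_⟩
    have := (mem_parClass_iff Indep h_exch S x hxC y).2 ⟨hyC, h.symm⟩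
    unfold mParClass at this
    rw [Finset.mem_filter] at this
    rcases this.2 with h | h
    · exact hy (by simp [h])
    · exact h hyi
  omega

lemma class_nonempty (Indep : Finset X → Prop) (S C : Finset X) (hC : C ∈ mParClasses Indep S) : C.Nonempty := by
  unfold mParClasses at hC
  rw [Finset.mem_image] at hC
  obtain ⟨i, hi, rfl⟩ := hC
  refine ⟨i, ?_⟩
  unfold mParClass
  rw [Finset.mem_filter]
  exact ⟨hi, Or.inl rfl⟩

lemma mN_one (Indep : Finset X → Prop) (ω : X → ℝ) (S : Finset X) :
    mN Indep ω 1 S = ∑ x ∈ mCont Indep S, ω x := by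
  rw [mN_succ, ← sum_mD0 Indep ω S ω]
  exact Finset.sum_congr rfl fun x _ => mul_comm _ _

lemma hyp_base (Indep : Finset X → Prop) (ω : X → ℝ) (hω : ∀ x, 0 < ω x)
    (h_hered : ∀ S T : Finset X, S ⊆ T → Indep T → Indep S)
    (h_exch : ∀ S T : Finset X, Indep S → Indep T → S.card < T.card →
      ∃ x ∈ T, x ∉ S ∧ Indep (insert x S)) (T : Finset X) (hT : Indep T) (p : ℝ)
    (S : Finset X) (hS : Indep S) (hc : S.card + 2 ≤ T.card)
    (hp : ((mParClasses Indep S).card : ℝ) ≤ p)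
    (v : X → ℝ) (y : ℝ) (hB : mB Indep ω 0 S v y = 0) :
    mQ Indep ω (1 + 1 / (p - 1)) 0 S v y ≤ 0 := by
  have hN0 : mN Indep ω 0 S = 1 := by simp [mN, hS]
  unfold mQ
  rw [sum_mD0_bil Indep ω h_hered h_exch, sum_mD0, hN0, mul_one, ← sum_classes Indep h_exch]
  refine base_real (mParClasses Indep S) (fun C => ∑ x ∈ C, ω x) (fun C => ∑ x ∈ C, v x) ?_ y p
    (two_le_card Indep h_exch h_hered T hT S hS hc) hp ?_
  · intro C hC
    exact Finset.sum_pos (fun x _ => hω x) (class_nonempty Indep S C hC)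
  · have h1 : ∑ x, mD x (mN Indep ω 1) S * v x = ∑ x, ∑ y, mD x (mD y (mN Indep ω 0)) S * v x * ω y := by
      refine Finset.sum_congr rfl fun x _ => ?_
      rw [euler1, Finset.sum_mul]
      exact Finset.sum_congr rfl fun z _ => by ring
    unfold mB at hB
    rw [zero_add, h1, sum_mD0_bil Indep ω h_hered h_exch, mN_one, ← sum_classes Indep h_exch] at hB
    have h2 : ∑ C ∈ mParClasses Indep S, (∑ x ∈ C, v x) * (∑ x ∈ C, ω x) = ∑ C ∈ mParClasses Indep S, (∑ x ∈ C, ω x) * (∑ x ∈ C, v x) :=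
      Finset.sum_congr rfl fun z _ => by ring
    rw [h2] at hB
    linarith

lemma hyp_all (Indep : Finset X → Prop) (ω : X → ℝ) (hω : ∀ x, 0 < ω x)
    (h_hered : ∀ S T : Finset X, S ⊆ T → Indep T → Indep S)
    (h_exch : ∀ S T : Finset X, Indep S → Indep T → S.card < T.card →
      ∃ x ∈ T, x ∉ S ∧ Indep (insert x S)) (T : Finset X) (hT : Indep T) (p : ℝ) (q : ℕ)
    (hq : q + 2 ≤ T.card)
    (hp : ∀ S, Indep S → S.card = q → ((mParClasses Indep S).card : ℝ) ≤ p) (n : ℕ) :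
    ∀ S, Indep S → S.card + n = q → ∀ v y, mB Indep ω n S v y = 0 →
      mQ Indep ω (1 + 1 / (p - 1)) n S v y ≤ 0 := by
  induction n with
  | zero =>
    intro S hS hc v y hB
    exact hyp_base Indep ω hω h_hered h_exch T hT p S hS (by omega) (hp S hS (by omega)) v y hB
  | succ n ih =>
    intro S hS hc v y hB
    refine hyp_step Indep ω hω h_hered h_exch T hT _ n S hS (by omega) ?_ v y hB
    intro x hx hi v y
    have hcard := Finset.card_insert_of_notMem hx
    exact hyp_of Indep ω _ n _ (mN_pos Indep ω hω h_exch T hT _ _ hi (by omega)) (ih _ hi (by omega)) v y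

/-- Unordered extension counts. -/
def mJ (Indep : Finset X → Prop) (ω : X → ℝ) (n : ℕ) (S : Finset X) : ℝ :=
  ∑ T ∈ Finset.univ.filter (fun T : Finset X => Disjoint S T ∧ Indep (S ∪ T) ∧ T.card = n), ∏ x ∈ T, ω x

lemma mJ_succ (Indep : Finset X → Prop) (ω : X → ℝ) (n : ℕ) (S : Finset X) :
    ((n : ℝ) + 1) * mJ Indep ω (n + 1) S = ∑ z, ω z * mD z (mJ Indep ω n) S := by
  have e1 : ((n : ℝ) + 1) * mJ Indep ω (n + 1) S = ∑ U ∈ Finset.univ.filter (fun T : Finset X => Disjoint S T ∧ Indep (S ∪ T) ∧ T.card = n + 1), ∑ _z ∈ U, ∏ x ∈ U, ω x := by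
    unfold mJ
    rw [Finset.mul_sum]
    refine Finset.sum_congr rfl fun U hU => ?_
    rw [Finset.mem_filter] at hU
    rw [Finset.sum_const, hU.2.2.2]; simp
  have e2 : ∑ z, ω z * mD z (mJ Indep ω n) S = ∑ z ∈ Finset.univ.filter (fun z => z ∉ S), ∑ T ∈ Finset.univ.filter (fun T : Finset X => Disjoint (insert z S) T ∧ Indep (insert z S ∪ T) ∧ T.card = n), ω z * ∏ x ∈ T, ω x := by
    rw [Finset.sum_filter]
    refine Finset.sum_congr rfl fun z _ => ?_
    by_cases hz : z ∈ S
    · simp [mD, hz]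
    · simp only [mD, hz, if_false, mJ, Finset.mul_sum, not_false_eq_true, if_true]
  rw [e1, e2, Finset.sum_sigma', Finset.sum_sigma']
  refine Finset.sum_bij' (fun a _ => ⟨a.2, a.1.erase a.2⟩) (fun a _ => ⟨insert a.1 a.2, a.1⟩) ?_ ?_ ?_ ?_ ?_
  · rintro ⟨U, z⟩ h
    simp only [Finset.mem_sigma, Finset.mem_filter, Finset.mem_univ, true_and] at h ⊢
    obtain ⟨⟨h1, h2, h3⟩, hz⟩ := h
    have hzS : z ∉ S := fun h => Finset.disjoint_left.1 h1 h hz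
    refine ⟨hzS, ?_, ?_, ?_⟩
    · rw [Finset.disjoint_insert_left]
      exact ⟨by simp, h1.mono_right (Finset.erase_subset _ _)⟩
    · have : insert z S ∪ U.erase z = S ∪ U := by
        rw [Finset.insert_union, ← Finset.union_insert, Finset.insert_erase hz]
      rwa [this]
    · rw [Finset.card_erase_of_mem hz, h3]; rfl
  · rintro ⟨z, U⟩ h
    simp only [Finset.mem_sigma, Finset.mem_filter, Finset.mem_univ, true_and] at h ⊢
    obtain ⟨hz, h1, h2, h3⟩ := h
    rw [Finset.disjoint_insert_left] at h1
    refine ⟨⟨?_, ?_, ?_⟩, by simp⟩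
    · rw [Finset.disjoint_insert_right]; exact ⟨hz, h1.2⟩
    · rwa [Finset.union_insert, ← Finset.insert_union]
    · rw [Finset.card_insert_of_notMem h1.1, h3]
  · rintro ⟨U, z⟩ h
    simp only [Finset.mem_sigma] at h
    simp [Finset.insert_erase h.2]
  · rintro ⟨z, U⟩ h
    simp only [Finset.mem_sigma, Finset.mem_filter, Finset.mem_univ, true_and] at h
    obtain ⟨hz, h1, h2, h3⟩ := h
    rw [Finset.disjoint_insert_left] at h1
    simp [Finset.erase_insert h1.1]
  · rintro ⟨U, z⟩ h
    simp only [Finset.mem_sigma] at h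
    exact (Finset.mul_prod_erase U ω h.2).symm

lemma mN_eq_mJ (Indep : Finset X → Prop) (ω : X → ℝ) (n : ℕ) :
    ∀ S, mN Indep ω n S = (n.factorial : ℝ) * mJ Indep ω n S := by
  induction n with
  | zero =>
    intro S
    have : Finset.univ.filter (fun T : Finset X => Disjoint S T ∧ Indep (S ∪ T) ∧ T.card = 0) = if Indep S then {∅} else ∅ := by
      ext T
      by_cases hS : Indep S
      · simp only [Finset.mem_filter, Finset.mem_univ, true_and, Finset.card_eq_zero, hS, if_true, Finset.mem_singleton]
        constructor
        · exact fun h => h.2.2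
        · rintro rfl; simp [hS]
      · simp only [Finset.mem_filter, Finset.mem_univ, true_and, Finset.card_eq_zero, hS, if_false, Finset.notMem_empty, iff_false]
        rintro ⟨_, h, rfl⟩; simp at h; exact hS h
    unfold mJ
    rw [this]
    by_cases hS : Indep S <;> simp [mN, hS]
  | succ n ih =>
    intro S
    rw [mN_succ, Nat.factorial_succ]
    push_cast
    have : ((n : ℝ) + 1) * n.factorial * mJ Indep ω (n + 1) S = n.factorial * (((n : ℝ) + 1) * mJ Indep ω (n + 1) S) := by ring
    rw [this, mJ_succ, Finset.mul_sum]
    refine Finset.sum_congr rfl fun z _ => ?_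
    by_cases hz : z ∈ S
    · simp [mD, hz]
    · simp only [mD, hz, if_false, ih]; ring

lemma mN_empty (Indep : Finset X → Prop) (ω : X → ℝ) (n : ℕ) :
    mN Indep ω n ∅ = (n.factorial : ℝ) * wNumIndep Indep ω n := by
  rw [mN_eq_mJ]
  congr 1
  unfold mJ wNumIndep
  simp

lemma mB_z (Indep : Finset X → Prop) (ω : X → ℝ) (n : ℕ) (S : Finset X) (t : ℝ) :
    mB Indep ω n S (fun x => 0 + (-t) * ω x) 1 = mN Indep ω (n + 1) S - t * mN Indep ω (n + 2) S := by
  rw [mB_shift Indep ω n S (fun _ => 0), euler2]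
  simp [mB]; ring

lemma mQ_z (Indep : Finset X → Prop) (ω : X → ℝ) (c : ℝ) (n : ℕ) (S : Finset X) (t : ℝ) :
    mQ Indep ω c n S (fun x => 0 + (-t) * ω x) 1 = t ^ 2 * mN Indep ω (n + 2) S - 2 * t * mN Indep ω (n + 1) S + c * mN Indep ω n S := by
  rw [mQ_expand Indep ω c n S (fun _ => 0), mB_eq, sumH_ω]
  simp [mB, mQ]; ring

/-- Propagation of equality downwards. -/
lemma eq_prop (Indep : Finset X → Prop) (ω : X → ℝ) (hω : ∀ x, 0 < ω x)
    (h_hered : ∀ S T : Finset X, S ⊆ T → Indep T → Indep S)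
    (h_exch : ∀ S T : Finset X, Indep S → Indep T → S.card < T.card →
      ∃ x ∈ T, x ∉ S ∧ Indep (insert x S)) (T : Finset X) (hT : Indep T) (p : ℝ) (q : ℕ)
    (hq : q + 2 ≤ T.card)
    (hp : ∀ S, Indep S → S.card = q → ((mParClasses Indep S).card : ℝ) ≤ p) (v : X → ℝ) (y : ℝ)
    (hB : mB Indep ω q ∅ v y = 0) (hQ : mQ Indep ω (1 + 1 / (p - 1)) q ∅ v y = 0) (S : Finset X) :
    ∀ n, Indep S → S.card + n = q → mB Indep ω n S v y = 0 ∧ mQ Indep ω (1 + 1 / (p - 1)) n S v y = 0 := by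
  induction S using Finset.induction_on with
  | empty =>
    intro n _ hn
    simp at hn
    subst hn
    exact ⟨hB, hQ⟩
  | insert x S hx ih =>
    intro n hi hn
    rw [Finset.card_insert_of_notMem hx] at hn
    have hS : Indep S := h_hered _ _ (Finset.subset_insert _ _) hi
    obtain ⟨h1, h2⟩ := ih (n + 1) hS (by omega)
    have hall := hyp_all Indep ω hω h_hered h_exch T hT p q hq hp
    have hrow := row_zero Indep ω (1 + 1 / (p - 1)) (n + 1) S
      (mN_pos Indep ω hω h_exch T hT _ _ hS (by omega)) (hall (n + 1) S hS (by omega)) v y h1 h2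
    have hBz : ∀ z, z ∉ S → mB Indep ω n (insert z S) v y = 0 := by
      intro z hz
      have := hrow z
      rw [row_succ] at this
      simpa [hz] using this
    refine ⟨hBz x hx, ?_⟩
    have hle : ∀ z, z ∉ S → mQ Indep ω (1 + 1 / (p - 1)) n (insert z S) v y ≤ 0 := by
      intro z hz
      by_cases hzi : Indep (insert z S)
      · exact hall n _ hzi (by rw [Finset.card_insert_of_notMem hz]; omega) v y (hBz z hz)
      · have h0 : ∀ m S', insert z S ⊆ S' → mN Indep ω m S' = 0 := fun m S' hs =>
          mN_eq_zero Indep ω h_hered _ _ (fun h => hzi (h_hered _ _ hs h))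
        have d1 : ∀ a S', insert z S ⊆ S' → mD a (mN Indep ω n) S' = 0 := by
          intro a S' hs
          unfold mD; split_ifs
          · rfl
          · exact h0 _ _ (hs.trans (Finset.subset_insert _ _))
        have d2 : ∀ a b, mD a (mD b (mN Indep ω n)) (insert z S) = 0 := by
          intro a b
          rw [mD]; split_ifs
          · rfl
          · exact d1 _ _ (Finset.subset_insert _ _)
        unfold mQ
        simp [d2, d1 _ _ (Finset.Subset.refl _), h0 _ _ (Finset.Subset.refl _)]
    rw [mQ_succ, Finset.sum_eq_zero_iff_of_nonpos] at h2
    · have := h2 x (Finset.mem_univ _)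
      simp only [hx, if_false] at this
      exact (mul_eq_zero.1 this).resolve_left (hω x).ne'
    · intro z _
      split_ifs with hz
      · simp
      · exact mul_nonpos_of_nonneg_of_nonpos (hω z).le (hle z hz)

lemma exists_big (Indep : Finset X → Prop) (k : ℕ) (hk2 : k < matroidRk Indep) :
    ∃ T, Indep T ∧ k + 1 ≤ T.card := by
  unfold matroidRk at hk2
  rw [Finset.lt_sup_iff] at hk2
  obtain ⟨T, _, h⟩ := hk2
  split_ifs at h with hT
  · exact ⟨T, hT, h⟩
  · omega

lemma card_le_contNum (Indep : Finset X → Prop) (q : ℕ) (S : Finset X) (hS : Indep S) (hq : S.card = q) :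
    (mParClasses Indep S).card ≤ contNum Indep q := by
  unfold contNum
  exact Finset.le_sup (f := fun S => (mParClasses Indep S).card) (by simp [hS, hq])

lemma ratio_prop (Indep : Finset X → Prop) (ω : X → ℝ)
    (h_hered : ∀ S T : Finset X, S ⊆ T → Indep T → Indep S) (r : ℝ) (q j : ℕ)
    (h : ∀ S, Indep S → S.card = q → mN Indep ω (j + 1) S = r * mN Indep ω j S) (n : ℕ) :
    ∀ S : Finset X, S.card + n = q → mN Indep ω (n + j + 1) S = r * mN Indep ω (n + j) S := by
  induction n with
  | zero =>
    intro S hS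
    by_cases hi : Indep S
    · rw [zero_add]; exact h S hi (by omega)
    · simp [mN_eq_zero Indep ω h_hered _ S hi]
  | succ n ih =>
    intro S hS
    have e : n + 1 + j = n + j + 1 := by omega
    rw [e, mN_succ, mN_succ Indep ω (n + j), Finset.mul_sum]
    refine Finset.sum_congr rfl fun z _ => ?_
    by_cases hz : z ∈ S
    · simp [mD, hz]
    · simp only [mD, hz, if_false]
      rw [ih _ (by rw [Finset.card_insert_of_notMem hz]; omega)]; ring

lemma forward_base (Indep : Finset X → Prop) (ω : X → ℝ) (hω : ∀ x, 0 < ω x)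
    (h_hered : ∀ S T : Finset X, S ⊆ T → Indep T → Indep S)
    (h_exch : ∀ S T : Finset X, Indep S → Indep T → S.card < T.card →
      ∃ x ∈ T, x ∉ S ∧ Indep (insert x S)) (T : Finset X) (hT : Indep T) (p : ℝ) (t : ℝ) (ht : 0 < t)
    (hp1 : 1 < p) (S : Finset X) (hS : Indep S) (hc : S.card + 2 ≤ T.card)
    (hp : ((mParClasses Indep S).card : ℝ) ≤ p)
    (hB : mB Indep ω 0 S (fun x => 0 + (-t) * ω x) 1 = 0)
    (hQ : mQ Indep ω (1 + 1 / (p - 1)) 0 S (fun x => 0 + (-t) * ω x) 1 = 0) :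
    ((mParClasses Indep S).card : ℝ) = p ∧ ∀ C ∈ mParClasses Indep S, ∑ x ∈ C, ω x = 1 / (t * (p - 1)) := by
  have hN0 : mN Indep ω 0 S = 1 := by simp [mN, hS]
  have hrow := row_zero Indep ω (1 + 1 / (p - 1)) 0 S (mN_pos Indep ω hω h_exch T hT _ _ hS (by omega))
    (hyp_base Indep ω hω h_hered h_exch T hT p S hS hc hp) _ 1 hB hQ
  rw [mB_z] at hB
  rw [mQ_z, hN0] at hQ
  have hN1 := mN_one Indep ω S
  simp only [zero_add] at hB hQ
  have hA : t * mN Indep ω 1 S = 1 + 1 / (p - 1) := by linear_combination (-t) * hB - hQ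
  have hcl : ∀ C ∈ mParClasses Indep S, ∑ x ∈ C, ω x = 1 / (t * (p - 1)) := by
    intro C hC
    obtain ⟨x, hx⟩ := class_nonempty Indep S C hC
    obtain ⟨hxc, hxC⟩ := class_eq Indep h_exch S C hC x hx
    have h := hrow x
    unfold mRow at h
    rw [sum_mD0_row Indep ω h_hered S _ x hxc, hxC] at h
    have hx' := hxc
    simp only [mCont, Finset.mem_filter, Finset.mem_univ, true_and] at hx'
    have hm : mD x (mN Indep ω 0) S = 1 := by simp [mD, mN, hx'.1, hx'.2]
    rw [hm] at h
    simp only [zero_add, ← Finset.mul_sum] at h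
    rw [← hN1] at h
    have hpp : p - 1 ≠ 0 := by linarith
    have : t * ∑ x ∈ C, ω x = 1 / (p - 1) := by linarith
    rw [← div_div, div_right_comm, ← this]; field_simp
  refine ⟨?_, hcl⟩
  rw [← sum_classes Indep h_exch, Finset.sum_congr rfl hcl] at hN1
  simp only [Finset.sum_const, nsmul_eq_mul] at hN1
  rw [hN1] at hA
  have hpp : p - 1 ≠ 0 := by linarith
  field_simp at hA
  linarith

lemma backward_base (Indep : Finset X → Prop) (ω : X → ℝ)
    (h_hered : ∀ S T : Finset X, S ⊆ T → Indep T → Indep S)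
    (h_exch : ∀ S T : Finset X, Indep S → Indep T → S.card < T.card →
      ∃ x ∈ T, x ∉ S ∧ Indep (insert x S)) (p s : ℝ) (S : Finset X) (hS : Indep S)
    (hp : ((mParClasses Indep S).card : ℝ) = p)
    (hcl : ∀ C ∈ mParClasses Indep S, ∑ x ∈ C, ω x = s) :
    mN Indep ω 1 S = (s * p) * mN Indep ω 0 S ∧ mN Indep ω 2 S = (s * (p - 1)) * mN Indep ω 1 S := by
  have hN0 : mN Indep ω 0 S = 1 := by simp [mN, hS]
  have hN1 : mN Indep ω 1 S = p * s := by
    rw [mN_one, ← sum_classes Indep h_exch, Finset.sum_congr rfl hcl, Finset.sum_const, nsmul_eq_mul, hp]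
  refine ⟨by rw [hN0, hN1]; ring, ?_⟩
  rw [← sumH_ω, sum_mD0_bil Indep ω h_hered h_exch, hN1, Finset.sum_congr rfl hcl,
    Finset.sum_congr rfl (fun C hC => by rw [hcl C hC] : ∀ C ∈ mParClasses Indep S, (∑ x ∈ C, ω x) * (∑ x ∈ C, ω x) = s * s)]
  simp only [Finset.sum_const, nsmul_eq_mul, hp]
  ring

/-- **Refined equality conditions for matroids.** Equality holds in the refined weighted
log-concavity inequality if and only if there is `s > 0` such that every independent set `S`
of size `k-1` satisfies `|Par(S)| = p(k-1)` and every parallel class of `S` has total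
weight `s`. -/
theorem matroid_refined_equality
    (Indep : Finset X → Prop)
    (h_ne : ∃ S : Finset X, Indep S)
    (h_hered : ∀ S T : Finset X, S ⊆ T → Indep T → Indep S)
    (h_exch : ∀ S T : Finset X, Indep S → Indep T → S.card < T.card →
      ∃ x ∈ T, x ∉ S ∧ Indep (insert x S))
    (ω : X → ℝ) (hω : ∀ x, 0 < ω x)
    (k : ℕ) (hk1 : 1 ≤ k) (hk2 : k < matroidRk Indep) :
    (wNumIndep Indep ω k) ^ 2 =
        ((1 : ℝ) + 1 / (k : ℝ)) * (1 + 1 / ((contNum Indep (k - 1) : ℝ) - 1)) *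
          wNumIndep Indep ω (k - 1) * wNumIndep Indep ω (k + 1) ↔
      ∃ s : ℝ, 0 < s ∧ ∀ S : Finset X, Indep S → S.card = k - 1 →
        (mParClasses Indep S).card = contNum Indep (k - 1) ∧
        ∀ C ∈ mParClasses Indep S, (∑ x ∈ C, ω x) = s := by
  obtain ⟨q, rfl⟩ : ∃ q, k = q + 1 := ⟨k - 1, by omega⟩
  rw [Nat.add_sub_cancel]
  obtain ⟨T, hT, hTc⟩ := exists_big Indep _ hk2
  have hE : Indep ∅ := h_hered _ _ (Finset.empty_subset _) hT
  set p : ℕ := contNum Indep q with hp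
  have hple : ∀ S, Indep S → S.card = q → ((mParClasses Indep S).card : ℝ) ≤ (p : ℝ) := by
    intro S hS hq
    exact_mod_cast card_le_contNum Indep q S hS hq
  have hp2 : 2 ≤ p := by
    obtain ⟨S, hST, hSq⟩ := Finset.exists_subset_card_eq (s := T) (n := q) (by omega)
    have hS := h_hered _ _ hST hT
    exact (two_le_card Indep h_exch h_hered T hT S hS (by omega)).trans (card_le_contNum Indep q S hS hSq)
  have hp1 : (1 : ℝ) < p := by exact_mod_cast hp2
  have hN0 : 0 < mN Indep ω q ∅ := mN_pos Indep ω hω h_exch T hT _ _ hE (by simp; omega)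
  have hN1 : 0 < mN Indep ω (q + 1) ∅ := mN_pos Indep ω hω h_exch T hT _ _ hE (by simp; omega)
  have hN2 : 0 < mN Indep ω (q + 2) ∅ := mN_pos Indep ω hω h_exch T hT _ _ hE (by simp; omega)
  have hpp : (p : ℝ) - 1 ≠ 0 := by linarith
  have hiff : (wNumIndep Indep ω (q + 1)) ^ 2 =
        ((1 : ℝ) + 1 / ((q + 1 : ℕ) : ℝ)) * (1 + 1 / ((p : ℝ) - 1)) *
          wNumIndep Indep ω q * wNumIndep Indep ω (q + 1 + 1) ↔
      mN Indep ω (q + 1) ∅ ^ 2 = (1 + 1 / ((p : ℝ) - 1)) * mN Indep ω q ∅ * mN Indep ω (q + 2) ∅ := by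
    rw [mN_empty, mN_empty, mN_empty, Nat.factorial_succ (q + 1), Nat.factorial_succ q]
    push_cast
    have hf : (0 : ℝ) < q.factorial := by exact_mod_cast Nat.factorial_pos q
    have hq1 : (0 : ℝ) < (q : ℝ) + 1 := by positivity
    generalize (1 + 1 / ((p : ℝ) - 1)) = c
    have e : (1 : ℝ) + 1 / ((q : ℝ) + 1) = ((q : ℝ) + 1 + 1) / ((q : ℝ) + 1) := by field_simp
    rw [e]
    have hF : ((q.factorial : ℝ) * ((q : ℝ) + 1)) ^ 2 ≠ 0 := by positivity
    rw [← mul_right_inj' hF]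
    refine Eq.congr ?_ ?_
    · ring
    · field_simp
  rw [hiff]
  constructor
  · intro heq
    set t := mN Indep ω (q + 1) ∅ / mN Indep ω (q + 2) ∅ with ht
    have htpos : 0 < t := div_pos hN1 hN2
    have htN : t * mN Indep ω (q + 2) ∅ = mN Indep ω (q + 1) ∅ := by rw [ht]; field_simp
    have hB : mB Indep ω q ∅ (fun x => 0 + (-t) * ω x) 1 = 0 := by rw [mB_z]; linarith
    have hQ : mQ Indep ω (1 + 1 / ((p : ℝ) - 1)) q ∅ (fun x => 0 + (-t) * ω x) 1 = 0 := by
      rw [mQ_z]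
      have h1 : mN Indep ω (q + 2) ∅ * (t ^ 2 * mN Indep ω (q + 2) ∅ - 2 * t * mN Indep ω (q + 1) ∅ + (1 + 1 / ((p : ℝ) - 1)) * mN Indep ω q ∅) = 0 := by
        rw [← htN] at heq ⊢
        linear_combination -heq
      exact (mul_eq_zero.1 h1).resolve_left hN2.ne'
    refine ⟨1 / (t * ((p : ℝ) - 1)), by have : (0 : ℝ) < (p : ℝ) - 1 := by linarith
                                        positivity, ?_⟩
    intro S hS hSq
    obtain ⟨h1, h2⟩ := eq_prop Indep ω hω h_hered h_exch T hT p q (by omega) hple _ _ hB hQ S 0 hS (by omega)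
    obtain ⟨h3, h4⟩ := forward_base Indep ω hω h_hered h_exch T hT p t htpos hp1 S hS (by omega) (hple S hS hSq) h1 h2
    exact ⟨by exact_mod_cast h3, h4⟩
  · rintro ⟨s, hs, h⟩
    have r1 := ratio_prop Indep ω h_hered (s * p) q 0 (fun S hS hq =>
      (backward_base Indep ω h_hered h_exch p s S hS (by exact_mod_cast (h S hS hq).1) (h S hS hq).2).1) q ∅ (by simp)
    have r2 := ratio_prop Indep ω h_hered (s * (p - 1)) q 1 (fun S hS hq =>
      (backward_base Indep ω h_hered h_exch p s S hS (by exact_mod_cast (h S hS hq).1) (h S hS hq).2).2) q ∅ (by simp)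
    simp only [add_zero] at r1
    have r3 : mN Indep ω (q + 2) ∅ = s * (p - 1) * mN Indep ω (q + 1) ∅ := r2
    rw [r3, r1]
    field_simp
    ring
end
end
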